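/- There exist universal constants c > 0 and n₀ such that for all n ≥ n₀, i ∈ {1,…,n}, and k with n ≤ k ≤ n²: suppose a randomized t-round adaptive algorithm making k exact linear measurements per round is such that, for every n×n real matrix A, it outputs unit vectors u', v' ∈ ℝⁿ such that with probability at least 9/10 (over the seed) there exist unit vectors u, v ∈ ℝⁿ with A·v = σᵢ(A)·u and Aᵀ·u = σᵢ(A)·v (an i-th singular vector pair of A) satisfying ‖u' − u‖ ≤ 1/10 and ‖v' − v‖ ≤ 1/10. Then t ≥ c·log(n²/k)/log log n. -/

import Mathlib

/-!
The hard inputs are `A = D + G + s u vᵀ`, where `G` is standard Gaussian, `s = √n log n`, and `u`,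
`v` are independent random unit sign vectors supported on disjoint blocks of `n / 4` coordinates.
Against this input it suffices to consider deterministic algorithms, one for each seed.

*The diagonal matrix `D` makes the `i`-th singular pair reveal `u`.* Let `C = 10000 s`. If
`i ≤ n / 2`, take `D = C + C E` with a coordinate projection `E` of rank `i - 1`; the `i`-th
singular value of `A` is then the largest one coming from the kernel of `E`. Otherwise take
`D = C - C E` with `E` of rank `n - i`, which makes it the smallest one coming from there. On that
kernel, of dimension more than `n / 2` and containing `u` and `v`, the matrix is `C` plus a small
perturbation, hence its singular values are to first order `C` plus the eigenvalues of the symmetric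
part of `G + s u vᵀ`. The extreme eigenvalues are near `± s / 2`, because `u` and `v` are
orthogonal and `G` has operator norm at most `s / 1000`. So `|σᵢ - C| ≥ 9 s / 20`, which forces the
left vector of any `i`-th singular pair to be correlated with `u`.

*Information bound.* The law of the transcript on a Gaussian input with mean `a` has an explicit
density with respect to i.i.d. Gaussian responses. If the queries see squared mass at most `T` of
the spike `w = u ⊗ v`, the laws with and without spike are comparable: probabilities with spike
are at most `exp (-y) + exp (s² T + y)` times those without. Without spike the queries are
independent of `w`, and a fixed orthonormal family of `k` queries sees more than `τ` of it with
probability at most `exp (-q τ / 8 + k / (2 q))`, where `q = n / 4`, by the exponential moment of a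
sign chaos. Likewise a fixed unit vector is correlated with `u` with probability at most
`2 exp (-q / 50)`. A union bound over the first round `j` that sees more than `τ j` of the spike
bounds the probability of success.

*Parameters.* The thresholds `τ j` can be taken to grow by a factor `O((log n)²)` per round,
starting from `O((k / n²) log n)`. All error terms are then `O(1 / n)` as long as the final budget
is `O(1 / (log n)²)`, so success requires `(log n) ^ (5 t) ≥ n² / k`.
-/

open MeasureTheory ProbabilityTheory Matrix
open scoped ENNReal Classical

noncomputable section

/-- Squared Euclidean norm of a finitely-indexed real vector. -/
def sqNorm {ι : Type*} [Fintype ι] (x : ι → ℝ) : ℝ := ∑ i, x i ^ 2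

/-- Squared Frobenius norm of a real matrix. -/
def frobSq {m n : Type*} [Fintype m] [Fintype n] (A : Matrix m n ℝ) : ℝ :=
  ∑ i, ∑ j, A i j ^ 2

/-- Spectral (ℓ₂ operator) norm of a real matrix. -/
def specNorm {m n : Type*} [Fintype m] [Fintype n] (A : Matrix m n ℝ) : ℝ :=
  sSup ((fun x : n → ℝ => Real.sqrt (sqNorm (A.mulVec x))) '' {x | sqNorm x ≤ 1})

/-- `i`-th largest singular value (1-based), characterized via
`σ_i(A) = min {‖A − X‖ : rank X ≤ i − 1}`. -/
def singVal {m n : Type*} [Fintype m] [Fintype n] (A : Matrix m n ℝ) (i : ℕ) : ℝ :=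
  sInf {c | ∃ X : Matrix m n ℝ, X.rank ≤ i - 1 ∧ c = specNorm (A - X)}

/-- Flattening of an `n × n` matrix into a vector in `ℝ^{n²}`. -/
def vec (n : ℕ) (A : Matrix (Fin n) (Fin n) ℝ) : Fin (n * n) → ℝ :=
  fun i => A (finProdFinEquiv.symm i).1 (finProdFinEquiv.symm i).2

/-- `u ⊗ v = vec (u vᵀ) ∈ ℝ^{n²}`. -/
def tensor {n : ℕ} (u v : Fin n → ℝ) : Fin (n * n) → ℝ :=
  vec n (Matrix.of fun i j => u i * v j)

/-- Standard Gaussian measure on `ι → ℝ`. -/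
def stdGaussian (ι : Type*) [Fintype ι] : Measure (ι → ℝ) :=
  Measure.pi fun _ => gaussianReal 0 1

/-- Standard Gaussian measure on `n × n` matrices (as `Fin n → Fin n → ℝ`). -/
def stdGaussianMat (n : ℕ) : Measure (Fin n → Fin n → ℝ) :=
  Measure.pi fun _ => stdGaussian (Fin n)

/-- Query maps of a deterministic `t`-round adaptive algorithm making `k` linear
measurements per round on inputs in `ℝ^N`. -/
def QueryMaps (N k t : ℕ) : Type :=
  (j : Fin t) → (Fin (j : ℕ) → (Fin k → ℝ)) → Matrix (Fin k) (Fin N) ℝ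

namespace QueryMaps

variable {N k t : ℕ}

/-- Restriction of a round-`j` history to the first `i` rounds. -/
def prefixHist {j : Fin t} (h : Fin (j : ℕ) → Fin k → ℝ) {i : Fin t}
    (hij : (i : ℕ) < (j : ℕ)) : Fin (i : ℕ) → Fin k → ℝ :=
  fun l => h ⟨l.1, l.isLt.trans hij⟩

/-- Validity of query maps: measurability, orthonormal rows within each round, and
orthogonality across rounds along consistent histories. -/
def Valid (Q : QueryMaps N k t) : Prop :=
  (∀ (j : Fin t) (i : Fin k) (l : Fin N), Measurable fun h => Q j h i l) ∧
  (∀ (j : Fin t) (h : Fin (j : ℕ) → Fin k → ℝ), Q j h * (Q j h)ᵀ = 1) ∧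
  (∀ (j i : Fin t) (hij : (i : ℕ) < (j : ℕ)) (h : Fin (j : ℕ) → Fin k → ℝ),
      Q j h * (Q i (prefixHist h hij))ᵀ = 0)

/-- Responses of the algorithm under exact linear measurements of `a`. -/
def resp (Q : QueryMaps N k t) (a : Fin N → ℝ) (j : Fin t) : Fin k → ℝ :=
  (Q j fun i => resp Q a ⟨i.1, i.isLt.trans j.isLt⟩).mulVec a
termination_by (j : ℕ)
decreasing_by exact i.isLt

/-- Responses of the algorithm under noisy linear measurements of `a`, with fresh
per-round noise `g`. -/
def nresp (Q : QueryMaps N k t) (a : Fin N → ℝ) (g : Fin t → Fin k → ℝ) (j : Fin t) :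
    Fin k → ℝ :=
  ((Q j fun i => nresp Q a g ⟨i.1, i.isLt.trans j.isLt⟩).mulVec a) + g j
termination_by (j : ℕ)
decreasing_by exact i.isLt

/-- The `tk × N` matrix stacking all the query matrices realized along the run of the
algorithm on input `a` (exact measurements). -/
def runMat (Q : QueryMaps N k t) (a : Fin N → ℝ) : Matrix (Fin t × Fin k) (Fin N) ℝ :=
  Matrix.of fun p l =>
    Q p.1 (fun i => resp Q a ⟨i.1, i.isLt.trans p.1.isLt⟩) p.2 l

end QueryMaps

/-- Kullback–Leibler divergence, valued in `[0, ∞]`, defined with the natural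
logarithm. -/
def klDiv {Ω : Type*} [MeasurableSpace Ω] (P Q : Measure Ω) : ℝ≥0∞ :=
  if P ≪ Q ∧ Integrable (fun x => Real.log ((P.rnDeriv Q x).toReal)) P then
    ENNReal.ofReal (∫ x, Real.log ((P.rnDeriv Q x).toReal) ∂P)
  else ⊤


/-- The rank-`r` plant `Σ_{i=1}^r uᵢ vᵢᵀ` built from the rows of `U` and `V`. -/
def plant {n r : ℕ} (U V : Fin r → Fin n → ℝ) : Matrix (Fin n) (Fin n) ℝ :=
  Matrix.of fun i j => ∑ l, U l i * V l j

/-- Schatten-`p` norm (real `p`), via the singular values. -/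
def schattenNorm {n : ℕ} (p : ℝ) (A : Matrix (Fin n) (Fin n) ℝ) : ℝ :=
  (∑ i ∈ Finset.range n, singVal A (i + 1) ^ p) ^ (1 / p)

/-- Ky-Fan `p` norm: sum of the `p` largest singular values. -/
def kyFanNorm {n : ℕ} (p : ℕ) (A : Matrix (Fin n) (Fin n) ℝ) : ℝ :=
  ∑ i ∈ Finset.range p, singVal A (i + 1)

/-- The standard Gaussian measure on `ι → ℝ`, written as a product measure so that the library
lemmas on `Measure.pi` apply. -/
local notation:max "γ" ι:max => (Measure.pi fun _ : ι => gaussianReal 0 1)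

/-! ### Vectors and matrices with orthonormal rows -/

section SqNorm

variable {ι κ : Type*} [Fintype ι]

lemma sqNorm_nonneg (x : ι → ℝ) : 0 ≤ sqNorm x :=
  Finset.sum_nonneg fun _ _ => sq_nonneg _

lemma sqNorm_eq_dotProduct (x : ι → ℝ) : sqNorm x = x ⬝ᵥ x :=
  Finset.sum_congr rfl fun _ _ => sq _

lemma sqNorm_smul (c : ℝ) (x : ι → ℝ) : sqNorm (c • x) = c ^ 2 * sqNorm x := by
  simp only [sqNorm, Pi.smul_apply, smul_eq_mul, mul_pow, Finset.mul_sum]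

lemma sqNorm_neg (x : ι → ℝ) : sqNorm (-x) = sqNorm x := by
  simp [sqNorm]

lemma sqNorm_single_one [DecidableEq ι] (i : ι) : sqNorm (Pi.single i 1 : ι → ℝ) = 1 := by
  simp [sqNorm_eq_dotProduct]

lemma dotProduct_sq_le_sqNorm_mul_sqNorm (x y : ι → ℝ) : (x ⬝ᵥ y) ^ 2 ≤ sqNorm x * sqNorm y :=
  Finset.sum_mul_sq_le_sq_mul_sq _ _ _

section Measurability

variable {α : Type*} [MeasurableSpace α]

@[fun_prop]
lemma measurable_dotProduct {f g : α → ι → ℝ} (hf : Measurable f) (hg : Measurable g) :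
    Measurable fun a => f a ⬝ᵥ g a := by
  unfold dotProduct
  fun_prop

@[fun_prop]
lemma measurable_sqNorm {f : α → ι → ℝ} (hf : Measurable f) : Measurable fun a => sqNorm (f a) := by
  unfold sqNorm
  fun_prop

lemma measurable_mulVec {M : α → Matrix κ ι ℝ} {f : α → ι → ℝ}
    (hM : ∀ i j, Measurable fun a => M a i j) (hf : Measurable f) :
    Measurable fun a => M a *ᵥ f a := by
  unfold mulVec dotProduct
  fun_prop

@[fun_prop]
lemma measurable_const_mulVec (M : Matrix κ ι ℝ) {f : α → ι → ℝ} (hf : Measurable f) :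
    Measurable fun a => M *ᵥ f a :=
  measurable_mulVec (fun _ _ => measurable_const) hf

end Measurability

variable [Fintype κ]

lemma trace_mul_transpose_eq_frobSq (A : Matrix κ ι ℝ) : (A * Aᵀ).trace = frobSq A := by
  simp only [trace, diag_apply, mul_apply, transpose_apply, ← sq, frobSq]

lemma sqNorm_transpose_mulVec_le {B : Matrix κ ι ℝ} {β : ℝ} (hβ : 0 ≤ β)
    (hB : ∀ x, sqNorm (B *ᵥ x) ≤ β * sqNorm x) (y : κ → ℝ) :
    sqNorm (Bᵀ *ᵥ y) ≤ β * sqNorm y := by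
  have hsq : sqNorm (Bᵀ *ᵥ y) * sqNorm (Bᵀ *ᵥ y) ≤ β * sqNorm y * sqNorm (Bᵀ *ᵥ y) :=
    calc sqNorm (Bᵀ *ᵥ y) * sqNorm (Bᵀ *ᵥ y)
        = ((B *ᵥ (Bᵀ *ᵥ y)) ⬝ᵥ y) ^ 2 := by
          rw [dotProduct_comm, ← dotProduct_transpose_mulVec, ← sqNorm_eq_dotProduct, sq]
      _ ≤ sqNorm (B *ᵥ (Bᵀ *ᵥ y)) * sqNorm y := dotProduct_sq_le_sqNorm_mul_sqNorm _ _
      _ ≤ β * sqNorm (Bᵀ *ᵥ y) * sqNorm y := by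
          have := sqNorm_nonneg y
          gcongr
          exact hB _
      _ = β * sqNorm y * sqNorm (Bᵀ *ᵥ y) := by ring
  rcases (sqNorm_nonneg (Bᵀ *ᵥ y)).eq_or_lt with h | h
  · rw [← h]
    exact mul_nonneg hβ (sqNorm_nonneg y)
  · exact le_of_mul_le_mul_right hsq h

section Coisometry

variable [DecidableEq κ] {S : Matrix κ ι ℝ}

lemma sqNorm_transpose_mulVec (hS : S * Sᵀ = 1) (y : κ → ℝ) : sqNorm (Sᵀ *ᵥ y) = sqNorm y := by
  rw [sqNorm_eq_dotProduct, dotProduct_transpose_mulVec, mulVec_mulVec, hS, one_mulVec,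
    sqNorm_eq_dotProduct]

lemma sqNorm_sub_transpose_mulVec_mulVec (hS : S * Sᵀ = 1) (x : ι → ℝ) :
    sqNorm (x - Sᵀ *ᵥ (S *ᵥ x)) = sqNorm x - sqNorm (S *ᵥ x) := by
  have hcross : x ⬝ᵥ Sᵀ *ᵥ (S *ᵥ x) = sqNorm (S *ᵥ x) := by
    rw [dotProduct_transpose_mulVec, sqNorm_eq_dotProduct]
  rw [sqNorm_eq_dotProduct, sub_dotProduct, dotProduct_sub, dotProduct_sub,
    dotProduct_comm (Sᵀ *ᵥ _) x, hcross, ← sqNorm_eq_dotProduct, ← sqNorm_eq_dotProduct,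
    sqNorm_transpose_mulVec hS]
  ring

lemma sqNorm_mulVec_le_of_mul_transpose_eq_one (hS : S * Sᵀ = 1) (x : ι → ℝ) :
    sqNorm (S *ᵥ x) ≤ sqNorm x := by
  have := sqNorm_sub_transpose_mulVec_mulVec hS x
  have := sqNorm_nonneg (x - Sᵀ *ᵥ (S *ᵥ x))
  linarith

lemma frobSq_of_mul_transpose_eq_one (hS : S * Sᵀ = 1) : frobSq S = Fintype.card κ := by
  rw [← trace_mul_transpose_eq_frobSq, hS, trace_one]

end Coisometry

end SqNorm

/-! ### The standard Gaussian measure -/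

section Pi

variable {ι : Type*} [Fintype ι] {α : ι → Type*} [∀ i, MeasurableSpace (α i)]
  (μ : (i : ι) → Measure (α i)) [∀ i, IsProbabilityMeasure (μ i)] {f : (i : ι) → α i → ℝ≥0∞}

lemma lintegral_pi_prod_eq_prod_lintegral (hf : ∀ i, Measurable (f i)) :
    ∫⁻ x, ∏ i, f i (x i) ∂Measure.pi μ = ∏ i, ∫⁻ y, f i y ∂μ i := by
  have hindep := lintegral_prod_eq_prod_lintegral_of_indepFun (μ := Measure.pi μ) Finset.univ
    (fun i (x : ∀ i, α i) => f i (x i)) (iIndepFun_pi fun i => (hf i).aemeasurable)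
    fun i => (hf i).comp (measurable_pi_apply i)
  rw [hindep]
  exact Finset.prod_congr rfl fun i _ => (measurePreserving_eval μ i).lintegral_comp (hf i)

lemma pi_withDensity_eq_withDensity_prod (hf : ∀ i, Measurable (f i))
    [∀ i, SigmaFinite ((μ i).withDensity (f i))] :
    Measure.pi (fun i => (μ i).withDensity (f i))
      = (Measure.pi μ).withDensity fun x => ∏ i, f i (x i) := by
  refine Measure.pi_eq fun s hs => ?_
  have hbox : (Set.univ.pi s).indicator (fun x => ∏ i, f i (x i))
      = fun x => ∏ i, (s i).indicator (f i) (x i) := by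
    ext x
    by_cases hx : x ∈ Set.univ.pi s
    · rw [Set.indicator_of_mem hx]
      exact Finset.prod_congr rfl fun i _ => (Set.indicator_of_mem (hx i trivial) _).symm
    · obtain ⟨i, hi⟩ : ∃ i, x i ∉ s i := by simpa using hx
      rw [Set.indicator_of_notMem hx]
      exact (Finset.prod_eq_zero (Finset.mem_univ i) (Set.indicator_of_notMem hi _)).symm
  rw [withDensity_apply _ (MeasurableSet.univ_pi hs),
    ← lintegral_indicator (MeasurableSet.univ_pi hs), hbox,
    lintegral_pi_prod_eq_prod_lintegral μ fun i => (hf i).indicator (hs i)]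
  exact Finset.prod_congr rfl fun i _ => by
    rw [lintegral_indicator (hs i), withDensity_apply _ (hs i)]

end Pi

section Gaussian

variable {ι : Type*} [Fintype ι]

lemma stdGaussian_map_toLp :
    (γ ι).map (WithLp.toLp 2) = ProbabilityTheory.stdGaussian (EuclideanSpace ℝ ι) :=
  map_pi_eq_stdGaussian

lemma integral_cexp_dotProduct_stdGaussian (c : ι → ℝ) :
    ∫ x, Complex.exp ((c ⬝ᵥ x : ℝ) * Complex.I) ∂γ ι = Complex.exp (-(sqNorm c : ℝ) / 2) := by
  have h := charFun_stdGaussian (E := EuclideanSpace ℝ ι) (WithLp.toLp 2 c)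
  rw [← stdGaussian_map_toLp, charFun_apply,
    integral_map (by fun_prop) (Measurable.aestronglyMeasurable (by fun_prop))] at h
  simpa [EuclideanSpace.inner_eq_star_dotProduct, EuclideanSpace.norm_sq_eq, sqNorm,
    ← Complex.ofReal_pow] using h

lemma eq_stdGaussian_of_integral_cexp_dotProduct {μ : Measure (ι → ℝ)} [IsFiniteMeasure μ]
    (h : ∀ c, ∫ x, Complex.exp ((c ⬝ᵥ x : ℝ) * Complex.I) ∂μ
      = Complex.exp (-(sqNorm c : ℝ) / 2)) :
    μ = γ ι := by
  let e := MeasurableEquiv.toLp 2 (ι → ℝ)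
  refine (e.map_measurableEquiv_injective) (Measure.ext_of_charFun (funext fun c => ?_))
  have hcharFun (ν : Measure (ι → ℝ)) : charFun (ν.map e) c
      = ∫ x, Complex.exp ((WithLp.ofLp c ⬝ᵥ x : ℝ) * Complex.I) ∂ν := by
    rw [charFun_apply, e.measurableEmbedding.integral_map]
    simp [e, EuclideanSpace.inner_eq_star_dotProduct]
  rw [hcharFun, hcharFun, h, integral_cexp_dotProduct_stdGaussian]

lemma stdGaussian_map_mulVec [DecidableEq ι] {U : Matrix ι ι ℝ} (hU : U * Uᵀ = 1) :
    (γ ι).map (U *ᵥ ·) = γ ι := by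
  have hUm : Measurable (U *ᵥ · : (ι → ℝ) → ι → ℝ) := by fun_prop
  have := Measure.isProbabilityMeasure_map (μ := γ ι) hUm.aemeasurable
  refine eq_stdGaussian_of_integral_cexp_dotProduct fun c => ?_
  rw [integral_map hUm.aemeasurable (Measurable.aestronglyMeasurable (by fun_prop))]
  have hadj (x : ι → ℝ) : c ⬝ᵥ U *ᵥ x = (Uᵀ *ᵥ c) ⬝ᵥ x := by
    rw [← dotProduct_transpose_mulVec, dotProduct_comm]
  simp_rw [hadj, integral_cexp_dotProduct_stdGaussian, sqNorm_transpose_mulVec hU]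

lemma lintegral_exp_mul_gaussianReal (c : ℝ) :
    ∫⁻ y, ENNReal.ofReal (Real.exp (c * y)) ∂gaussianReal 0 1
      = ENNReal.ofReal (Real.exp (c ^ 2 / 2)) := by
  rw [← ofReal_integral_eq_lintegral_ofReal (integrable_exp_mul_gaussianReal c)
    (ae_of_all _ fun _ => (Real.exp_pos _).le)]
  have hmgf := congrFun (mgf_fun_id_gaussianReal (μ := 0) (v := 1)) c
  rw [mgf] at hmgf
  rw [hmgf]
  simp

lemma lintegral_exp_dotProduct_stdGaussian (c : ι → ℝ) :
    ∫⁻ x, ENNReal.ofReal (Real.exp (c ⬝ᵥ x)) ∂γ ι = ENNReal.ofReal (Real.exp (sqNorm c / 2)) := by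
  simp only [dotProduct, Real.exp_sum, sqNorm, Finset.sum_div,
    ENNReal.ofReal_prod_of_nonneg fun _ _ => (Real.exp_pos _).le]
  exact (lintegral_pi_prod_eq_prod_lintegral _
    (f := fun i y => ENNReal.ofReal (Real.exp (c i * y))) fun i => by fun_prop).trans <|
    (Finset.prod_congr rfl fun i _ => lintegral_exp_mul_gaussianReal (c i))

lemma gaussianReal_one_eq_withDensity (a : ℝ) :
    gaussianReal a 1 = (gaussianReal 0 1).withDensity
      fun y => ENNReal.ofReal (Real.exp (a * y - a ^ 2 / 2)) := by
  rw [gaussianReal_of_var_ne_zero _ one_ne_zero, gaussianReal_of_var_ne_zero _ one_ne_zero,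
    ← withDensity_mul _ (measurable_gaussianPDF _ _) (by fun_prop)]
  congr 1
  ext y
  simp only [gaussianPDF, Pi.mul_apply, gaussianPDFReal]
  rw [← ENNReal.ofReal_mul (by positivity), mul_assoc _ (Real.exp _) (Real.exp _),
    ← Real.exp_add]
  congr 3
  simp only [NNReal.coe_one, mul_one, sub_zero]
  ring

lemma stdGaussian_map_const_add (a : ι → ℝ) :
    (γ ι).map (a + ·) = (γ ι).withDensity
      fun g => ENNReal.ofReal (Real.exp (a ⬝ᵥ g - sqNorm a / 2)) := by
  have hshift : (γ ι).map (a + ·) = Measure.pi fun i => gaussianReal (a i) 1 := by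
    have hmap := Measure.pi_map_pi (μ := fun _ : ι => gaussianReal 0 1)
      (f := fun i y => a i + y) fun i => by fun_prop
    simp only [gaussianReal_map_const_add, zero_add] at hmap
    exact hmap
  have (i : ι) : IsProbabilityMeasure ((gaussianReal 0 1).withDensity
      fun y => ENNReal.ofReal (Real.exp (a i * y - a i ^ 2 / 2))) :=
    gaussianReal_one_eq_withDensity (a i) ▸ inferInstance
  rw [hshift, funext fun i => gaussianReal_one_eq_withDensity (a i),
    pi_withDensity_eq_withDensity_prod _ fun i => by fun_prop]
  congr 1 with g
  rw [← ENNReal.ofReal_prod_of_nonneg fun _ _ => (Real.exp_pos _).le, ← Real.exp_sum,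
    Finset.sum_sub_distrib, ← Finset.sum_div]
  rfl

/-- The **Cameron–Martin formula** for the standard Gaussian measure. -/
lemma lintegral_const_add_stdGaussian (a : ι → ℝ) {F : (ι → ℝ) → ℝ≥0∞} (hF : Measurable F) :
    ∫⁻ g, F (a + g) ∂γ ι
      = ∫⁻ g, ENNReal.ofReal (Real.exp (a ⬝ᵥ g - sqNorm a / 2)) * F g ∂γ ι := by
  rw [← lintegral_map hF (measurable_const_add a), stdGaussian_map_const_add,
    lintegral_withDensity_eq_lintegral_mul _ (by fun_prop) hF]
  rfl

end Gaussian

/-! ### Adapted products -/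

section Past

variable {E : Type*} {t : ℕ}

/-- The first `j` entries of a sequence of length `t`: the history available to an adaptive
procedure in its `j`-th step. -/
abbrev past (x : Fin t → E) (j : Fin t) : Fin (j : ℕ) → E :=
  fun i => x ⟨i, i.isLt.trans j.isLt⟩

lemma past_snoc_castSucc (x : Fin t → E) (y : E) (j : Fin t) :
    past (Fin.snoc x y : Fin (t + 1) → E) j.castSucc = past x j :=
  funext fun i => Fin.snoc_castSucc (α := fun _ => E) y x ⟨i, i.isLt.trans j.isLt⟩

lemma past_snoc_last (x : Fin t → E) (y : E) :
    past (Fin.snoc x y : Fin (t + 1) → E) (Fin.last t) = x :=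
  funext fun i => Fin.snoc_castSucc (α := fun _ => E) y x i

variable [MeasurableSpace E]

lemma measurable_past (j : Fin t) : Measurable fun x : Fin t → E => past x j := by
  unfold past
  fun_prop

variable (ν : Measure E) [IsProbabilityMeasure ν]

lemma integral_pi_fin_succ_eq_integral_snoc {g : (Fin (t + 1) → E) → ℂ}
    (hg : Integrable g (Measure.pi fun _ => ν)) :
    ∫ x, g x ∂Measure.pi (fun _ : Fin (t + 1) => ν)
      = ∫ x, ∫ y, g (Fin.snoc x y) ∂ν ∂Measure.pi fun _ : Fin t => ν := by
  have hmp := (measurePreserving_piFinSuccAbove (fun _ : Fin (t + 1) => ν) (Fin.last t)).symm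
  let e := (MeasurableEquiv.piFinSuccAbove (fun _ : Fin (t + 1) => E) (Fin.last t)).symm
  have he (x : Fin t → E) (y : E) : e (y, x) = Fin.snoc x y := Fin.insertNth_last' y x
  have hint : Integrable (fun z => g (e z)) (ν.prod (Measure.pi fun _ : Fin t => ν)) :=
    (hmp.integrable_comp_emb e.measurableEmbedding).2 hg
  rw [← hmp.integral_comp e.measurableEmbedding, integral_prod_symm _ hint]
  simp only [he]

lemma integral_prod_past_eq_one {C : ℝ} : ∀ {t : ℕ} {f : (j : Fin t) → (Fin (j : ℕ) → E) → E → ℂ},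
    (∀ j, Measurable (Function.uncurry (f j))) → (∀ j h y, ‖f j h y‖ ≤ C) →
    (∀ j h, ∫ y, f j h y ∂ν = 1) →
    ∫ x, ∏ j, f j (past x j) (x j) ∂Measure.pi (fun _ : Fin t => ν) = 1
  | 0, _, _, _, _ => by simp
  | t + 1, f, hf, hC, hone => by
    have hint : Integrable (fun x => ∏ j, f j (past x j) (x j))
        (Measure.pi fun _ : Fin (t + 1) => ν) := by
      refine Integrable.of_bound (C := ∏ _j : Fin (t + 1), C)
        (Finset.measurable_prod _ fun j _ => (hf j).comp
          ((measurable_past j).prodMk (measurable_pi_apply j))).aestronglyMeasurable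
        (ae_of_all _ fun x => ?_)
      rw [norm_prod]
      exact Finset.prod_le_prod (fun _ _ => norm_nonneg _) fun j _ => hC j _ _
    have hsplit (x : Fin t → E) (y : E) :
        ∏ j, f j (past (Fin.snoc x y : Fin (t + 1) → E) j) ((Fin.snoc x y : Fin (t + 1) → E) j)
          = (∏ j : Fin t, f j.castSucc (past x j) (x j)) * f (Fin.last t) x y := by
      simp only [Fin.prod_univ_castSucc, past_snoc_castSucc, past_snoc_last,
        Fin.snoc_castSucc, Fin.snoc_last]
    rw [integral_pi_fin_succ_eq_integral_snoc ν hint]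
    simp only [hsplit, integral_const_mul, hone, mul_one]
    exact integral_prod_past_eq_one (f := fun j => f j.castSucc) (fun j => hf j.castSucc)
      (fun j => hC j.castSucc) fun j => hone j.castSucc

end Past

/-! ### Transcripts of adaptive algorithms -/

namespace QueryMaps

variable {N k t : ℕ} {Q : QueryMaps N k t}

/-- The reference law of transcripts, under which all responses are independent standard
Gaussians. -/
abbrev transcriptMeasure (t k : ℕ) : Measure (Fin t → Fin k → ℝ) :=
  Measure.pi fun _ => γ (Fin k)

/-- All queries issued along the transcript `x`, stacked into one matrix. For the transcript
`x = Q.resp a` it is `runMat Q a`. -/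
def stack (Q : QueryMaps N k t) (x : Fin t → Fin k → ℝ) : Matrix (Fin t × Fin k) (Fin N) ℝ :=
  Matrix.of fun p l => Q p.1 (past x p.1) p.2 l

lemma sqNorm_stack_mulVec (Q : QueryMaps N k t) (x : Fin t → Fin k → ℝ) (a : Fin N → ℝ) :
    sqNorm (Q.stack x *ᵥ a) = ∑ j, sqNorm (Q j (past x j) *ᵥ a) :=
  Fintype.sum_prod_type _

lemma stack_mulVec_dotProduct_uncurry (Q : QueryMaps N k t) (x : Fin t → Fin k → ℝ)
    (a : Fin N → ℝ) :
    (Q.stack x *ᵥ a) ⬝ᵥ Function.uncurry x = ∑ j, (Q j (past x j) *ᵥ a) ⬝ᵥ x j :=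
  Fintype.sum_prod_type _

lemma Valid.stack_mul_transpose (hQ : Q.Valid) (x : Fin t → Fin k → ℝ) :
    Q.stack x * (Q.stack x)ᵀ = 1 := by
  obtain ⟨-, hortho, hcross⟩ := hQ
  have hlater {j j' : Fin t} (h : j' < j) : Q j (past x j) * (Q j' (past x j'))ᵀ = 0 :=
    hcross j j' h (past x j)
  ext ⟨j, r⟩ ⟨j', r'⟩
  change (Q j (past x j) * (Q j' (past x j'))ᵀ) r r' = _
  rcases lt_trichotomy j j' with h | rfl | h
  · have hearlier : Q j (past x j) * (Q j' (past x j'))ᵀ = 0 := by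
      rw [← transpose_transpose (_ * _), transpose_mul, transpose_transpose, hlater h,
        transpose_zero]
    simp [hearlier, one_apply, h.ne]
  · simp [hortho, one_apply]
  · simp [hlater h, one_apply, h.ne']

/-- An input with transcript `x`: its component in the span of the queries issued along `x` is
dictated by `x`, its orthogonal component is that of `h`. -/
def reconstruct (Q : QueryMaps N k t) (x : Fin t → Fin k → ℝ) (h : Fin N → ℝ) : Fin N → ℝ :=
  (Q.stack x)ᵀ *ᵥ Function.uncurry x + (h - (Q.stack x)ᵀ *ᵥ (Q.stack x *ᵥ h))

lemma Valid.stack_mulVec_reconstruct (hQ : Q.Valid) (x : Fin t → Fin k → ℝ) (h : Fin N → ℝ) :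
    Q.stack x *ᵥ Q.reconstruct x h = Function.uncurry x := by
  rw [reconstruct, mulVec_add, mulVec_sub, mulVec_mulVec, mulVec_mulVec, hQ.stack_mul_transpose]
  simp

lemma Valid.resp_reconstruct (hQ : Q.Valid) (x : Fin t → Fin k → ℝ) (h : Fin N → ℝ) :
    Q.resp (Q.reconstruct x h) = x := by
  suffices ∀ (m : ℕ) (hm : m < t), Q.resp (Q.reconstruct x h) ⟨m, hm⟩ = x ⟨m, hm⟩ from
    funext fun j => this j j.isLt
  intro m
  induction m using Nat.strong_induction_on with
  | _ m ih =>
    intro hm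
    have hpast : (fun i : Fin m => Q.resp (Q.reconstruct x h) ⟨i, i.isLt.trans hm⟩)
        = past x ⟨m, hm⟩ := funext fun i => ih i i.isLt _
    rw [resp]
    change Q ⟨m, hm⟩ (fun i : Fin m => Q.resp (Q.reconstruct x h) ⟨i, i.isLt.trans hm⟩) *ᵥ _ = _
    rw [hpast]
    exact funext fun r => congrFun (hQ.stack_mulVec_reconstruct x h) (⟨m, hm⟩, r)

lemma dotProduct_reconstruct (Q : QueryMaps N k t) (x : Fin t → Fin k → ℝ) (h a : Fin N → ℝ) :
    a ⬝ᵥ Q.reconstruct x h = (Q.stack x *ᵥ a) ⬝ᵥ Function.uncurry x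
      + (a - (Q.stack x)ᵀ *ᵥ (Q.stack x *ᵥ a)) ⬝ᵥ h := by
  rw [reconstruct, dotProduct_add, dotProduct_sub, sub_dotProduct, dotProduct_transpose_mulVec,
    dotProduct_transpose_mulVec, dotProduct_comm (_ᵀ *ᵥ _) h, dotProduct_transpose_mulVec,
    dotProduct_comm (Function.uncurry x), dotProduct_comm (Q.stack x *ᵥ h)]

section Measurability

lemma Valid.measurable_stack (hQ : Q.Valid) (p : Fin t × Fin k) (l : Fin N) :
    Measurable fun x => Q.stack x p l :=
  (hQ.1 p.1 p.2 l).comp (measurable_past p.1)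

lemma Valid.measurable_stack_mulVec (hQ : Q.Valid) (a : Fin N → ℝ) :
    Measurable fun x => Q.stack x *ᵥ a :=
  measurable_mulVec hQ.measurable_stack measurable_const

lemma measurable_uncurry_transcript :
    Measurable fun x : Fin t → Fin k → ℝ => Function.uncurry x := by
  unfold Function.uncurry
  fun_prop

lemma Valid.measurable_reconstruct (hQ : Q.Valid) :
    Measurable fun p : (Fin t → Fin k → ℝ) × (Fin N → ℝ) => Q.reconstruct p.1 p.2 := by
  have hS (p : Fin t × Fin k) (l : Fin N) : Measurable
      fun z : (Fin t → Fin k → ℝ) × (Fin N → ℝ) => Q.stack z.1 p l :=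
    (hQ.measurable_stack p l).comp measurable_fst
  have hSt := fun l p => hS p l
  exact (measurable_mulVec hSt (measurable_uncurry_transcript.comp measurable_fst)).add
    (measurable_snd.sub (measurable_mulVec hSt (measurable_mulVec hS measurable_snd)))

lemma measurable_resp_prod {Ω : Type*} [MeasurableSpace Ω] {Qf : Ω → QueryMaps N k t}
    (hQf : ∀ (j : Fin t) (i : Fin k) (l : Fin N),
      Measurable fun p : Ω × (Fin (j : ℕ) → Fin k → ℝ) => Qf p.1 j p.2 i l) :
    Measurable fun p : Ω × (Fin N → ℝ) => (Qf p.1).resp p.2 := by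
  suffices ∀ (m : ℕ) (hm : m < t),
      Measurable fun p : Ω × (Fin N → ℝ) => (Qf p.1).resp p.2 ⟨m, hm⟩ from
    measurable_pi_lambda _ fun j => this j j.isLt
  intro m
  induction m using Nat.strong_induction_on with
  | _ m ih =>
    intro hm
    have hpast : Measurable fun p : Ω × (Fin N → ℝ) =>
        fun i : Fin m => (Qf p.1).resp p.2 ⟨i, i.isLt.trans hm⟩ :=
      measurable_pi_lambda _ fun i => ih i i.isLt _
    have hresp : (fun p : Ω × (Fin N → ℝ) => (Qf p.1).resp p.2 ⟨m, hm⟩) = fun p =>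
        Qf p.1 ⟨m, hm⟩ (fun i : Fin m => (Qf p.1).resp p.2 ⟨i, i.isLt.trans hm⟩) *ᵥ p.2 := by
      funext p
      rw [resp]
    rw [hresp]
    exact measurable_mulVec (fun r l => (hQf ⟨m, hm⟩ r l).comp (measurable_fst.prodMk hpast))
      measurable_snd

lemma Valid.measurable_resp (hQ : Q.Valid) : Measurable fun a : Fin N → ℝ => Q.resp a :=
  (measurable_resp_prod (Ω := Unit) (Qf := fun _ => Q) fun j i l =>
    (hQ.1 j i l).comp measurable_snd).comp (measurable_const (a := ()) |>.prodMk measurable_id)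

end Measurability

/-! ### The law of the transcript on a Gaussian input -/

/-- One factor of the exponential martingale `exp (i ∑ ⟨cⱼ, yⱼ⟩ + ∑ ‖cⱼ‖² / 2)`, for the
(predictable) drift vector `c` and the Gaussian increment `y`. -/
def cexpFactor (c y : Fin k → ℝ) : ℂ :=
  Complex.exp ((c ⬝ᵥ y : ℝ) * Complex.I + (sqNorm c : ℝ) / 2)

lemma norm_cexpFactor (c y : Fin k → ℝ) : ‖cexpFactor c y‖ = Real.exp (sqNorm c / 2) := by
  simp [cexpFactor, Complex.norm_exp]

lemma integral_cexpFactor (c : Fin k → ℝ) : ∫ y, cexpFactor c y ∂γ (Fin k) = 1 := by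
  simp only [cexpFactor, Complex.exp_add, integral_mul_const]
  rw [integral_cexp_dotProduct_stdGaussian, ← Complex.exp_add]
  simp [neg_div]

lemma Valid.integral_prod_cexpFactor (hQ : Q.Valid) (c : Fin N → ℝ) :
    ∫ x, ∏ j, cexpFactor (Q j (past x j) *ᵥ c) (x j) ∂transcriptMeasure t k = 1 := by
  refine integral_prod_past_eq_one (γ (Fin k)) (C := Real.exp (sqNorm c / 2))
    (f := fun j h y => cexpFactor (Q j h *ᵥ c) y) (fun j => ?_) (fun j h y => ?_)
    fun j h => integral_cexpFactor _
  · have hquery : Measurable fun p : (Fin (j : ℕ) → Fin k → ℝ) × (Fin k → ℝ) => Q j p.1 *ᵥ c :=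
      measurable_mulVec (fun r l => (hQ.1 j r l).comp measurable_fst) measurable_const
    unfold Function.uncurry cexpFactor
    fun_prop
  · rw [norm_cexpFactor]
    gcongr
    exact sqNorm_mulVec_le_of_mul_transpose_eq_one (hQ.2.1 j h) c

lemma Valid.integral_cexp_dotProduct_reconstruct (hQ : Q.Valid) (c : Fin N → ℝ)
    (x : Fin t → Fin k → ℝ) :
    ∫ h, Complex.exp ((c ⬝ᵥ Q.reconstruct x h : ℝ) * Complex.I) ∂γ (Fin N)
      = Complex.exp (-(sqNorm c : ℝ) / 2) * ∏ j, cexpFactor (Q j (past x j) *ᵥ c) (x j) := by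
  simp_rw [dotProduct_reconstruct, Complex.ofReal_add, add_mul, Complex.exp_add,
    integral_const_mul, integral_cexp_dotProduct_stdGaussian,
    sqNorm_sub_transpose_mulVec_mulVec (hQ.stack_mul_transpose x)]
  simp only [cexpFactor]
  rw [← Complex.exp_sum, ← Complex.exp_add, ← Complex.exp_add, stack_mulVec_dotProduct_uncurry,
    sqNorm_stack_mulVec, Finset.sum_add_distrib, ← Finset.sum_mul, ← Finset.sum_div]
  congr 1
  push_cast
  ring

lemma Valid.map_reconstruct (hQ : Q.Valid) :
    ((transcriptMeasure t k).prod (γ (Fin N))).map (fun p => Q.reconstruct p.1 p.2)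
      = γ (Fin N) := by
  have hmeas := hQ.measurable_reconstruct
  refine eq_stdGaussian_of_integral_cexp_dotProduct fun c => ?_
  have hint : Integrable (fun p : (Fin t → Fin k → ℝ) × (Fin N → ℝ) =>
      Complex.exp ((c ⬝ᵥ Q.reconstruct p.1 p.2 : ℝ) * Complex.I))
      ((transcriptMeasure t k).prod (γ (Fin N))) :=
    Integrable.of_bound (Measurable.aestronglyMeasurable (by fun_prop)) 1
      (ae_of_all _ fun z => (Complex.norm_exp_ofReal_mul_I _).le)
  rw [integral_map hmeas.aemeasurable (Measurable.aestronglyMeasurable (by fun_prop)),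
    integral_prod _ hint]
  simp_rw [hQ.integral_cexp_dotProduct_reconstruct c, integral_const_mul,
    hQ.integral_prod_cexpFactor, mul_one]

lemma Valid.lintegral_eq_lintegral_reconstruct (hQ : Q.Valid) {F : (Fin N → ℝ) → ℝ≥0∞}
    (hF : Measurable F) :
    ∫⁻ g, F g ∂γ (Fin N)
      = ∫⁻ x, ∫⁻ h, F (Q.reconstruct x h) ∂γ (Fin N) ∂transcriptMeasure t k := by
  have hrec := hQ.measurable_reconstruct
  rw [← lintegral_prod (fun p => F (Q.reconstruct p.1 p.2)) (hF.comp hrec).aemeasurable,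
    ← lintegral_map hF hrec, hQ.map_reconstruct]

/-- The density, with respect to `transcriptMeasure`, of the law of the transcript on the input
`a + g` with `g` standard Gaussian. -/
def transcriptDensity (Q : QueryMaps N k t) (a : Fin N → ℝ) (x : Fin t → Fin k → ℝ) : ℝ :=
  Real.exp ((Q.stack x *ᵥ a) ⬝ᵥ Function.uncurry x - sqNorm (Q.stack x *ᵥ a) / 2)

lemma transcriptDensity_nonneg (Q : QueryMaps N k t) (a : Fin N → ℝ) (x : Fin t → Fin k → ℝ) :
    0 ≤ Q.transcriptDensity a x :=
  (Real.exp_pos _).le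

lemma Valid.measurable_transcriptDensity (hQ : Q.Valid) (a : Fin N → ℝ) :
    Measurable (Q.transcriptDensity a) := by
  have := hQ.measurable_stack_mulVec a
  have := measurable_uncurry_transcript (t := t) (k := k)
  unfold transcriptDensity
  fun_prop

lemma Valid.lintegral_exp_dotProduct_reconstruct (hQ : Q.Valid) (a : Fin N → ℝ)
    (x : Fin t → Fin k → ℝ) :
    ∫⁻ h, ENNReal.ofReal (Real.exp (a ⬝ᵥ Q.reconstruct x h - sqNorm a / 2)) ∂γ (Fin N)
      = ENNReal.ofReal (Q.transcriptDensity a x) := by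
  have hsplit (h : Fin N → ℝ) :
      ENNReal.ofReal (Real.exp (a ⬝ᵥ Q.reconstruct x h - sqNorm a / 2))
        = ENNReal.ofReal (Real.exp ((Q.stack x *ᵥ a) ⬝ᵥ Function.uncurry x - sqNorm a / 2))
          * ENNReal.ofReal (Real.exp ((a - (Q.stack x)ᵀ *ᵥ (Q.stack x *ᵥ a)) ⬝ᵥ h)) := by
    rw [← ENNReal.ofReal_mul (Real.exp_pos _).le, ← Real.exp_add, dotProduct_reconstruct]
    ring_nf
  simp_rw [hsplit]
  rw [lintegral_const_mul _ (by fun_prop), lintegral_exp_dotProduct_stdGaussian,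
    ← ENNReal.ofReal_mul (Real.exp_pos _).le, ← Real.exp_add,
    sqNorm_sub_transpose_mulVec_mulVec (hQ.stack_mul_transpose x), transcriptDensity]
  ring_nf

lemma Valid.lintegral_resp_add (hQ : Q.Valid) (a : Fin N → ℝ) {F : (Fin t → Fin k → ℝ) → ℝ≥0∞}
    (hF : Measurable F) :
    ∫⁻ g, F (Q.resp (a + g)) ∂γ (Fin N)
      = ∫⁻ x, ENNReal.ofReal (Q.transcriptDensity a x) * F x ∂transcriptMeasure t k := by
  have hFresp : Measurable fun g => F (Q.resp g) := hF.comp hQ.measurable_resp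
  have hmeas : Measurable fun g =>
      ENNReal.ofReal (Real.exp (a ⬝ᵥ g - sqNorm a / 2)) * F (Q.resp g) :=
    Measurable.mul (by fun_prop) hFresp
  rw [lintegral_const_add_stdGaussian a hFresp, hQ.lintegral_eq_lintegral_reconstruct hmeas]
  refine lintegral_congr fun x => ?_
  have hrec : Measurable fun h => Q.reconstruct x h := hQ.measurable_reconstruct.of_uncurry_left
  simp_rw [hQ.resp_reconstruct x]
  rw [lintegral_mul_const _ (by fun_prop), hQ.lintegral_exp_dotProduct_reconstruct]

lemma Valid.lintegral_transcriptDensity (hQ : Q.Valid) (a : Fin N → ℝ) :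
    ∫⁻ x, ENNReal.ofReal (Q.transcriptDensity a x) ∂transcriptMeasure t k = 1 := by
  simpa using (hQ.lintegral_resp_add a (F := fun _ => 1) measurable_const).symm

lemma Valid.measure_resp_add_mem (hQ : Q.Valid) (a : Fin N → ℝ) {B : Set (Fin t → Fin k → ℝ)}
    (hB : MeasurableSet B) :
    γ (Fin N) {g | Q.resp (a + g) ∈ B}
      = ∫⁻ x in B, ENNReal.ofReal (Q.transcriptDensity a x) ∂transcriptMeasure t k := by
  have hset : MeasurableSet {g | Q.resp (a + g) ∈ B} :=
    hQ.measurable_resp.comp (measurable_const_add a) hB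
  rw [← lintegral_indicator_one hset, ← lintegral_indicator hB]
  refine (hQ.lintegral_resp_add a (measurable_one.indicator hB)).trans
    (lintegral_congr fun x => ?_)
  by_cases hx : x ∈ B <;> simp [hx]

/-- The log-density is concave along `a + ℝ w` with second derivative `-sqNorm (Q.stack x *ᵥ w)`,
so its value at `s` exceeds the mean of its values at `0` and `2 s` by at most `s ^ 2 * T / 2`. -/
lemma transcriptDensity_add_smul_le {x : Fin t → Fin k → ℝ} {w : Fin N → ℝ} {T : ℝ}
    (hT : sqNorm (Q.stack x *ᵥ w) ≤ T) (a : Fin N → ℝ) (s y : ℝ) :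
    Q.transcriptDensity (a + s • w) x ≤ Real.exp (-y) * Q.transcriptDensity (a + (2 * s) • w) x
      + Real.exp (s ^ 2 * T + y) * Q.transcriptDensity a x := by
  simp only [transcriptDensity, ← Real.exp_add]
  set L : ℝ → ℝ := fun r => (Q.stack x *ᵥ (a + r • w)) ⬝ᵥ Function.uncurry x
    - sqNorm (Q.stack x *ᵥ (a + r • w)) / 2 with hL
  have hmid : 2 * L s = L 0 + L (2 * s) + s ^ 2 * sqNorm (Q.stack x *ᵥ w) := by
    simp only [hL, mulVec_add, mulVec_smul, add_dotProduct, smul_dotProduct, smul_eq_mul,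
      sqNorm_eq_dotProduct, dotProduct_add, dotProduct_smul]
    ring
  have hgap : s ^ 2 * sqNorm (Q.stack x *ᵥ w) ≤ s ^ 2 * T := by gcongr
  have hzero : L 0 = (Q.stack x *ᵥ a) ⬝ᵥ Function.uncurry x - sqNorm (Q.stack x *ᵥ a) / 2 := by
    simp [hL]
  rw [← hzero]
  rcases le_total (L s) (-y + L (2 * s)) with h | h
  · exact (Real.exp_le_exp.2 h).trans (le_add_of_nonneg_right (Real.exp_pos _).le)
  · exact (Real.exp_le_exp.2 (by linarith : L s ≤ _)).trans
      (le_add_of_nonneg_left (Real.exp_pos _).le)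

lemma Valid.measure_resp_add_smul_mem_le (hQ : Q.Valid) (a w : Fin N → ℝ) (s : ℝ) {T : ℝ}
    (y : ℝ) {B : Set (Fin t → Fin k → ℝ)} (hB : MeasurableSet B)
    (hT : ∀ x ∈ B, sqNorm (Q.stack x *ᵥ w) ≤ T) :
    γ (Fin N) {g | Q.resp (a + s • w + g) ∈ B}
      ≤ ENNReal.ofReal (Real.exp (-y)) + ENNReal.ofReal (Real.exp (s ^ 2 * T + y))
        * γ (Fin N) {g | Q.resp (a + g) ∈ B} := by
  have hdens := hQ.measurable_transcriptDensity (a + (2 * s) • w)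
  have hdens₀ := hQ.measurable_transcriptDensity a
  rw [hQ.measure_resp_add_mem _ hB, hQ.measure_resp_add_mem _ hB]
  calc ∫⁻ x in B, ENNReal.ofReal (Q.transcriptDensity (a + s • w) x) ∂transcriptMeasure t k
      ≤ ∫⁻ x in B, (ENNReal.ofReal (Real.exp (-y))
            * ENNReal.ofReal (Q.transcriptDensity (a + (2 * s) • w) x)
          + ENNReal.ofReal (Real.exp (s ^ 2 * T + y))
            * ENNReal.ofReal (Q.transcriptDensity a x)) ∂transcriptMeasure t k := by
        refine setLIntegral_mono' hB fun x hx => ?_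
        rw [← ENNReal.ofReal_mul (Real.exp_pos _).le, ← ENNReal.ofReal_mul (Real.exp_pos _).le,
          ← ENNReal.ofReal_add (mul_nonneg (Real.exp_pos _).le (transcriptDensity_nonneg _ _ _))
            (mul_nonneg (Real.exp_pos _).le (transcriptDensity_nonneg _ _ _))]
        exact ENNReal.ofReal_le_ofReal (transcriptDensity_add_smul_le (hT x hx) a s y)
    _ = ENNReal.ofReal (Real.exp (-y))
          * ∫⁻ x in B, ENNReal.ofReal (Q.transcriptDensity (a + (2 * s) • w) x)
              ∂transcriptMeasure t k
        + ENNReal.ofReal (Real.exp (s ^ 2 * T + y))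
          * ∫⁻ x in B, ENNReal.ofReal (Q.transcriptDensity a x) ∂transcriptMeasure t k := by
        rw [lintegral_add_left (by fun_prop), lintegral_const_mul _ (by fun_prop),
          lintegral_const_mul _ (by fun_prop)]
    _ ≤ _ := by
        gcongr
        exact mul_le_of_le_one_right' <| (setLIntegral_le_lintegral _ _).trans_eq
          (hQ.lintegral_transcriptDensity _)

end QueryMaps

/-! ### Exponential moments of quadratic forms -/

section QuadraticForms

variable {ι κ : Type*} [Fintype ι] [Fintype κ]

lemma frobSq_nonneg (A : Matrix κ ι ℝ) : 0 ≤ frobSq A :=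
  Finset.sum_nonneg fun _ _ => sqNorm_nonneg _

lemma exists_orthogonal_diagonal [DecidableEq ι] {M : Matrix ι ι ℝ} (hM : M.IsSymm) :
    ∃ (U : Matrix ι ι ℝ) (d : ι → ℝ), U * Uᵀ = 1 ∧ Uᵀ * U = 1 ∧ M = U * diagonal d * Uᵀ := by
  have hH : M.IsHermitian := (conjTranspose_eq_transpose_of_trivial M).trans hM
  have hspec := hH.spectral_theorem
  have hright := Unitary.coe_mul_star_self hH.eigenvectorUnitary
  have hleft := Unitary.coe_star_mul_self hH.eigenvectorUnitary
  simp only [Unitary.conjStarAlgAut_apply, Unitary.coe_star, star_eq_conjTranspose,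
    conjTranspose_eq_transpose_of_trivial] at hspec hright hleft
  exact ⟨hH.eigenvectorUnitary, hH.eigenvalues, hright, hleft, hspec⟩

lemma exists_orthogonal_sqNorm_mulVec_eq_sum [DecidableEq ι] (B : Matrix κ ι ℝ) :
    ∃ (U : Matrix ι ι ℝ) (d : ι → ℝ), U * Uᵀ = 1 ∧ Uᵀ * U = 1 ∧ ∑ i, d i = frobSq B ∧
      ∀ g, sqNorm (B *ᵥ (U *ᵥ g)) = ∑ i, d i * g i ^ 2 := by
  obtain ⟨U, d, hright, hleft, hdiag⟩ := exists_orthogonal_diagonal (M := Bᵀ * B) (by simp [IsSymm])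
  refine ⟨U, d, hright, hleft, ?_, fun g => ?_⟩
  · rw [← trace_mul_transpose_eq_frobSq, trace_mul_comm, hdiag, trace_mul_comm, ← mul_assoc, hleft,
      one_mul, trace_diagonal]
  · have hcancel : Uᵀ *ᵥ (U *ᵥ g) = g := by rw [mulVec_mulVec, hleft, one_mulVec]
    calc sqNorm (B *ᵥ (U *ᵥ g)) = (U *ᵥ g) ⬝ᵥ ((Bᵀ * B) *ᵥ (U *ᵥ g)) := by
          rw [sqNorm_eq_dotProduct, ← mulVec_mulVec, dotProduct_transpose_mulVec]
      _ = (Uᵀ *ᵥ (U *ᵥ g)) ⬝ᵥ (diagonal d *ᵥ (Uᵀ *ᵥ (U *ᵥ g))) := by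
          rw [hdiag, ← mulVec_mulVec, ← mulVec_mulVec, dotProduct_comm (Uᵀ *ᵥ _),
            dotProduct_transpose_mulVec, dotProduct_comm]
      _ = ∑ i, d i * g i ^ 2 := by
          rw [hcancel]
          exact Finset.sum_congr rfl fun i _ => by rw [mulVec_diagonal]; ring

lemma lintegral_exp_mul_sq_gaussianReal_le {x : ℝ} (hx₀ : 0 ≤ x) (hx : x ≤ 1 / 4) :
    ∫⁻ y, ENNReal.ofReal (Real.exp (x * y ^ 2)) ∂gaussianReal 0 1
      ≤ ENNReal.ofReal (Real.exp (2 * x)) := by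
  have hrate : 0 < 1 / 2 - x := by linarith
  have hdens (y : ℝ) : (gaussianPDF 0 1 * fun y => ENNReal.ofReal (Real.exp (x * y ^ 2))) y
      = ENNReal.ofReal ((√(2 * Real.pi))⁻¹ * Real.exp (-(1 / 2 - x) * y ^ 2)) := by
    rw [Pi.mul_apply, gaussianPDF, gaussianPDFReal, ← ENNReal.ofReal_mul (by positivity), mul_assoc,
      ← Real.exp_add, NNReal.coe_one]
    ring_nf
  rw [gaussianReal_of_var_ne_zero _ one_ne_zero,
    lintegral_withDensity_eq_lintegral_mul _ (measurable_gaussianPDF _ _) (by fun_prop)]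
  simp_rw [hdens]
  rw [← ofReal_integral_eq_lintegral_ofReal ((integrable_exp_neg_mul_sq hrate).const_mul _)
    (ae_of_all _ fun _ => by positivity), integral_const_mul, integral_gaussian,
    ← Real.sqrt_inv, ← Real.sqrt_mul (by positivity)]
  refine ENNReal.ofReal_le_ofReal (Real.sqrt_le_iff.2 ⟨(Real.exp_pos _).le, ?_⟩)
  calc (2 * Real.pi)⁻¹ * (Real.pi / (1 / 2 - x)) = (1 - 2 * x)⁻¹ := by
        have : 1 - 2 * x ≠ 0 := by linarith
        field_simp
    _ ≤ 4 * x + 1 := by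
        rw [inv_le_iff_one_le_mul₀ (by linarith)]
        nlinarith
    _ ≤ Real.exp (4 * x) := Real.add_one_le_exp _
    _ = Real.exp (2 * x) ^ 2 := by rw [← Real.exp_nat_mul]; push_cast; ring_nf

lemma lintegral_exp_sum_mul_sq_stdGaussian_le {d : ι → ℝ} (hd₀ : ∀ i, 0 ≤ d i)
    (hd : ∀ i, d i ≤ 1 / 4) :
    ∫⁻ g, ENNReal.ofReal (Real.exp (∑ i, d i * g i ^ 2)) ∂γ ι
      ≤ ENNReal.ofReal (Real.exp (2 * ∑ i, d i)) := by
  simp_rw [Finset.mul_sum, Real.exp_sum,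
    ENNReal.ofReal_prod_of_nonneg fun _ _ => (Real.exp_pos _).le]
  rw [lintegral_pi_prod_eq_prod_lintegral (μ := fun _ => gaussianReal 0 1)
    (f := fun i y => ENNReal.ofReal (Real.exp (d i * y ^ 2))) fun i => by fun_prop]
  exact Finset.prod_le_prod' fun i _ => lintegral_exp_mul_sq_gaussianReal_le (hd₀ i) (hd i)

lemma lintegral_exp_mul_sqNorm_mulVec_stdGaussian_le {B : Matrix κ ι ℝ} {β c : ℝ} (hc : 0 ≤ c)
    (hcβ : c * β ≤ 1 / 4) (hB : ∀ x, sqNorm (B *ᵥ x) ≤ β * sqNorm x) :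
    ∫⁻ g, ENNReal.ofReal (Real.exp (c * sqNorm (B *ᵥ g))) ∂γ ι
      ≤ ENNReal.ofReal (Real.exp (2 * c * frobSq B)) := by
  obtain ⟨U, d, hright, hleft, hsum, hquad⟩ := exists_orthogonal_sqNorm_mulVec_eq_sum B
  have hd (i : ι) : 0 ≤ d i ∧ d i ≤ β := by
    have hcol : sqNorm (B *ᵥ (U *ᵥ Pi.single i 1)) = d i := by
      rw [hquad, Finset.sum_eq_single i] <;> simp +contextual
    have hunit : sqNorm (U *ᵥ Pi.single i 1) = 1 := by
      have := sqNorm_transpose_mulVec (S := Uᵀ) (by rwa [transpose_transpose]) (Pi.single i 1)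
      rwa [transpose_transpose, sqNorm_single_one] at this
    refine ⟨hcol ▸ sqNorm_nonneg _, ?_⟩
    simpa only [hcol, hunit, mul_one] using hB (U *ᵥ Pi.single i 1)
  calc ∫⁻ g, ENNReal.ofReal (Real.exp (c * sqNorm (B *ᵥ g))) ∂γ ι
      = ∫⁻ g, ENNReal.ofReal (Real.exp (c * sqNorm (B *ᵥ g))) ∂(γ ι).map (U *ᵥ ·) := by
        rw [stdGaussian_map_mulVec hright]
    _ = ∫⁻ g, ENNReal.ofReal (Real.exp (∑ i, c * d i * g i ^ 2)) ∂γ ι := by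
        rw [lintegral_map (by fun_prop) (by fun_prop)]
        simp_rw [hquad, Finset.mul_sum, mul_assoc]
    _ ≤ ENNReal.ofReal (Real.exp (2 * ∑ i, c * d i)) :=
        lintegral_exp_sum_mul_sq_stdGaussian_le (fun i => mul_nonneg hc (hd i).1) fun i =>
          (mul_le_mul_of_nonneg_left (hd i).2 hc).trans hcβ
    _ = ENNReal.ofReal (Real.exp (2 * c * frobSq B)) := by
        rw [← Finset.mul_sum, hsum, mul_assoc]

end QuadraticForms

section Contraction

variable {κ α β : Type*} [Fintype α] [Fintype β]

/-- Contraction of the second index of a linear map on `ℝ^(α × β)` with the vector `y`. -/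
def contractSnd (P : Matrix κ (α × β) ℝ) (y : β → ℝ) : Matrix κ α ℝ :=
  Matrix.of fun r a => ∑ b, P r (a, b) * y b

lemma contractSnd_mulVec (P : Matrix κ (α × β) ℝ) (x : α → ℝ) (y : β → ℝ) :
    contractSnd P y *ᵥ x = P *ᵥ fun p => x p.1 * y p.2 := by
  funext r
  simp only [mulVec, dotProduct, contractSnd, of_apply, Fintype.sum_prod_type, Finset.sum_mul]
  exact Finset.sum_congr rfl fun a _ => Finset.sum_congr rfl fun b _ => by ring

lemma sqNorm_mul (x : α → ℝ) (y : β → ℝ) :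
    sqNorm (fun p : α × β => x p.1 * y p.2) = sqNorm x * sqNorm y := by
  simp only [sqNorm, mul_pow, Fintype.sum_prod_type, Finset.sum_mul_sum]

variable [Fintype κ]

lemma sqNorm_contractSnd_mulVec_le {P : Matrix κ (α × β) ℝ}
    (hP : ∀ x, sqNorm (P *ᵥ x) ≤ sqNorm x) (x : α → ℝ) (y : β → ℝ) :
    sqNorm (contractSnd P y *ᵥ x) ≤ sqNorm y * sqNorm x := by
  rw [contractSnd_mulVec, mul_comm, ← sqNorm_mul]
  exact hP _

lemma frobSq_contractSnd_le {P : Matrix κ (α × β) ℝ} (hP : ∀ x, sqNorm (P *ᵥ x) ≤ sqNorm x)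
    (y : β → ℝ) : frobSq (contractSnd P y) ≤ Fintype.card α * sqNorm y := by
  have hcol (a : α) : ∑ r, contractSnd P y r a ^ 2 ≤ sqNorm y := by
    have := sqNorm_contractSnd_mulVec_le hP (Pi.single a 1) y
    rw [sqNorm_single_one, mul_one] at this
    simpa [sqNorm] using this
  rw [frobSq, Finset.sum_comm, ← nsmul_eq_mul]
  exact Finset.sum_le_card_nsmul _ _ _ fun a _ => hcol a

end Contraction

/-! ### Random signs -/

/-- The sign `±1` encoded by a Boolean; random sign vectors are handled by summing over
`ι → Bool`. -/
def boolSign (b : Bool) : ℝ := if b then 1 else -1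

lemma boolSign_sq (b : Bool) : boolSign b ^ 2 = 1 := by cases b <;> simp [boolSign]

section Signs

variable {ι κ α β : Type*} [Fintype ι] [Fintype κ] [Fintype α] [Fintype β]

lemma sqNorm_boolSign_comp (ε : ι → Bool) : sqNorm (boolSign ∘ ε) = Fintype.card ι := by
  simp [sqNorm, boolSign_sq]

variable [DecidableEq ι] [DecidableEq α] [DecidableEq β]

lemma sum_exp_dotProduct_boolSign (c : ι → ℝ) :
    ∑ ε : ι → Bool, Real.exp (c ⬝ᵥ (boolSign ∘ ε)) = ∏ i, (2 * Real.cosh (c i)) := by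
  simp_rw [dotProduct, Real.exp_sum]
  have hdistrib := Finset.prod_univ_sum (fun _ : ι => (Finset.univ : Finset Bool))
    fun i b => Real.exp (c i * boolSign b)
  rw [Fintype.piFinset_univ] at hdistrib
  refine hdistrib.symm.trans (Finset.prod_congr rfl fun i _ => ?_)
  simp only [Fintype.sum_bool, boolSign, ↓reduceIte, Bool.false_eq_true, Real.cosh_eq]
  ring_nf

lemma sum_exp_dotProduct_boolSign_le (c : ι → ℝ) :
    ∑ ε : ι → Bool, Real.exp (c ⬝ᵥ (boolSign ∘ ε))
      ≤ 2 ^ Fintype.card ι * Real.exp (sqNorm c / 2) := by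
  rw [sum_exp_dotProduct_boolSign, Finset.prod_mul_distrib, Finset.prod_const, Finset.card_univ,
    sqNorm, Finset.sum_div, Real.exp_sum]
  gcongr with i
  exact Real.cosh_le_exp_half_sq _

/-- The Gaussian average of `exp (√(2c) ⟨B ε, g⟩)` is `exp (c ‖B ε‖²)`, so the signs may be averaged
first, with `g` fixed. -/
lemma sum_exp_mul_sqNorm_mulVec_boolSign_le {B : Matrix κ ι ℝ} {b c : ℝ} (hb : 0 ≤ b) (hc : 0 ≤ c)
    (hcb : c * b ≤ 1 / 4) (hB : ∀ x, sqNorm (B *ᵥ x) ≤ b * sqNorm x) :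
    ∑ ε : ι → Bool, Real.exp (c * sqNorm (B *ᵥ (boolSign ∘ ε)))
      ≤ 2 ^ Fintype.card ι * Real.exp (2 * c * frobSq B) := by
  set r := √(2 * c)
  have hr : r ^ 2 = 2 * c := Real.sq_sqrt (by positivity)
  have hlin (ε : ι → Bool) : ENNReal.ofReal (Real.exp (c * sqNorm (B *ᵥ (boolSign ∘ ε))))
      = ∫⁻ g, ENNReal.ofReal (Real.exp ((r • Bᵀ *ᵥ g) ⬝ᵥ (boolSign ∘ ε))) ∂γ κ := by
    have hgauss := lintegral_exp_dotProduct_stdGaussian (r • (B *ᵥ (boolSign ∘ ε)))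
    rw [sqNorm_smul, hr, show 2 * c * sqNorm (B *ᵥ (boolSign ∘ ε)) / 2
      = c * sqNorm (B *ᵥ (boolSign ∘ ε)) by ring] at hgauss
    simp_rw [← hgauss, smul_dotProduct, dotProduct_comm (Bᵀ *ᵥ _), dotProduct_transpose_mulVec,
      dotProduct_comm (B *ᵥ _)]
  rw [← ENNReal.ofReal_le_ofReal_iff (by positivity),
    ENNReal.ofReal_sum_of_nonneg fun _ _ => (Real.exp_pos _).le]
  simp_rw [hlin]
  rw [← lintegral_finsetSum _ fun ε _ => by fun_prop]
  calc ∫⁻ g, ∑ ε : ι → Bool, ENNReal.ofReal (Real.exp ((r • Bᵀ *ᵥ g) ⬝ᵥ (boolSign ∘ ε))) ∂γ κ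
      ≤ ∫⁻ g, ENNReal.ofReal (2 ^ Fintype.card ι)
          * ENNReal.ofReal (Real.exp (c * sqNorm (Bᵀ *ᵥ g))) ∂γ κ := by
        refine lintegral_mono fun g => ?_
        rw [← ENNReal.ofReal_sum_of_nonneg fun _ _ => (Real.exp_pos _).le,
          ← ENNReal.ofReal_mul (by positivity)]
        refine ENNReal.ofReal_le_ofReal ((sum_exp_dotProduct_boolSign_le _).trans_eq ?_)
        rw [sqNorm_smul, hr]
        ring_nf
    _ ≤ ENNReal.ofReal (2 ^ Fintype.card ι) * ENNReal.ofReal (Real.exp (2 * c * frobSq B)) := by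
        rw [lintegral_const_mul _ (by fun_prop), ← trace_mul_transpose_eq_frobSq, trace_mul_comm]
        gcongr
        simpa only [← trace_mul_transpose_eq_frobSq, transpose_transpose] using
          lintegral_exp_mul_sqNorm_mulVec_stdGaussian_le hc hcb (sqNorm_transpose_mulVec_le hb hB)
    _ = ENNReal.ofReal (2 ^ Fintype.card ι * Real.exp (2 * c * frobSq B)) :=
        (ENNReal.ofReal_mul (by positivity)).symm

/-- Conditionally on `δ` the exponent is a sign chaos in `ε`, and its squared Frobenius norm is in
turn a sign chaos in `δ`. -/
lemma sum_exp_sqNorm_mulVec_boolSign_mul_boolSign_le {P : Matrix κ (α × β) ℝ} {q : ℝ} (hq : 0 < q)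
    (hα : Fintype.card α ≤ q) (hβ : Fintype.card β ≤ q)
    (hP : ∀ x, sqNorm (P *ᵥ x) ≤ sqNorm x) :
    ∑ ε : α → Bool, ∑ δ : β → Bool,
        Real.exp (1 / (8 * q) * sqNorm (P *ᵥ fun p => boolSign (ε p.1) * boolSign (δ p.2)))
      ≤ 2 ^ Fintype.card α * (2 ^ Fintype.card β * Real.exp (frobSq P / (2 * q))) := by
  let P' : Matrix (κ × α) β ℝ := Matrix.of fun p b => P p.1 (p.2, b)
  have hfrob (y : β → ℝ) : frobSq (contractSnd P y) = sqNorm (P' *ᵥ y) := by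
    simp [frobSq, sqNorm, contractSnd, P', mulVec, dotProduct, Fintype.sum_prod_type]
  have hP' (y : β → ℝ) : sqNorm (P' *ᵥ y) ≤ q * sqNorm y :=
    hfrob y ▸ (frobSq_contractSnd_le hP y).trans (mul_le_mul_of_nonneg_right hα (sqNorm_nonneg y))
  have hinner (δ : β → Bool) : ∑ ε : α → Bool,
        Real.exp (1 / (8 * q) * sqNorm (P *ᵥ fun p => boolSign (ε p.1) * boolSign (δ p.2)))
      ≤ 2 ^ Fintype.card α * Real.exp (1 / (4 * q) * sqNorm (P' *ᵥ (boolSign ∘ δ))) := by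
    have := sum_exp_mul_sqNorm_mulVec_boolSign_le (c := 1 / (8 * q)) hq.le (by positivity)
      (by field_simp; norm_num) fun x => (sqNorm_contractSnd_mulVec_le hP x (boolSign ∘ δ)).trans
        (mul_le_mul_of_nonneg_right ((sqNorm_boolSign_comp δ).trans_le hβ) (sqNorm_nonneg x))
    simp_rw [contractSnd_mulVec, hfrob, show 2 * (1 / (8 * q)) = 1 / (4 * q) by ring] at this
    exact this
  have houter := sum_exp_mul_sqNorm_mulVec_boolSign_le (c := 1 / (4 * q)) hq.le (by positivity)
    (by field_simp; norm_num) hP'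
  rw [Finset.sum_comm]
  refine (Finset.sum_le_sum fun δ _ => hinner δ).trans ?_
  rw [← Finset.mul_sum]
  refine mul_le_mul_of_nonneg_left (houter.trans_eq ?_) (by positivity)
  rw [show frobSq P' = frobSq P by simp [frobSq, P', Fintype.sum_prod_type]]
  ring_nf

end Signs

/-! ### Random unit sign vectors -/

section Extend

variable {α ι κ : Type*} [Fintype α] [Fintype ι] {e : α → ι}

lemma sqNorm_extend_zero (he : e.Injective) (y : α → ℝ) :
    sqNorm (Function.extend e y 0) = sqNorm y := by
  refine (Fintype.sum_of_injective e he _ _ (fun i hi => ?_) fun a => ?_).symm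
  · rw [Function.extend_apply' _ _ _ hi, Pi.zero_apply, sq, zero_mul]
  · rw [he.extend_apply]

lemma mulVec_extend_zero (he : e.Injective) (A : Matrix κ ι ℝ) (y : α → ℝ) :
    A *ᵥ Function.extend e y 0 = A.submatrix id e *ᵥ y := by
  ext k
  refine (Fintype.sum_of_injective e he _ _ (fun i hi => ?_) fun a => ?_).symm
  · rw [Function.extend_apply' _ _ _ hi, Pi.zero_apply, mul_zero]
  · rw [he.extend_apply]
    rfl

lemma sqNorm_comp_le (he : e.Injective) (x : ι → ℝ) : sqNorm (x ∘ e) ≤ sqNorm x := by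
  classical
  simpa [sqNorm] using Finset.sum_le_sum_of_subset_of_nonneg
    (Finset.subset_univ (Finset.univ.map ⟨e, he⟩)) fun i _ _ => sq_nonneg (x i)

lemma frobSq_submatrix_id_le [Fintype κ] (he : e.Injective) (A : Matrix κ ι ℝ) :
    frobSq (A.submatrix id e) ≤ frobSq A :=
  Finset.sum_le_sum fun k _ => sqNorm_comp_le he (A k)

end Extend

section Tensor

variable {n : ℕ}

@[simp]
lemma tensor_apply (u v : Fin n → ℝ) (p : Fin n × Fin n) :
    tensor u v (finProdFinEquiv p) = u p.1 * v p.2 := by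
  simp only [tensor, _root_.vec, Equiv.symm_apply_apply, of_apply]

lemma sqNorm_tensor (u v : Fin n → ℝ) : sqNorm (tensor u v) = sqNorm u * sqNorm v := by
  rw [← sqNorm_mul, sqNorm, ← Equiv.sum_comp finProdFinEquiv]
  simp only [tensor_apply, sqNorm]

lemma tensor_extend_zero {α β : Type*} {e : α → Fin n} {f : β → Fin n} (he : e.Injective)
    (hf : f.Injective) (x : α → ℝ) (y : β → ℝ) :
    tensor (Function.extend e x 0) (Function.extend f y 0) =
      Function.extend (finProdFinEquiv ∘ Prod.map e f) (fun p => x p.1 * y p.2) 0 := by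
  have hinj := finProdFinEquiv.injective.comp (he.prodMap hf)
  ext i
  obtain ⟨⟨a, b⟩, rfl⟩ := finProdFinEquiv.surjective i
  rw [tensor_apply]
  by_cases hab : (∃ c, e c = a) ∧ ∃ d, f d = b
  · obtain ⟨⟨c, rfl⟩, d, rfl⟩ := hab
    rw [he.extend_apply, hf.extend_apply]
    exact (hinj.extend_apply (fun p => x p.1 * y p.2) 0 (c, d)).symm
  · rw [Function.extend_apply' _ _ (finProdFinEquiv (a, b))]
    · rcases not_and_or.1 hab with h | h <;> simp [Function.extend_apply' _ _ _ h]
    · rintro ⟨p, hp⟩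
      obtain ⟨h₁, h₂⟩ := Prod.mk.inj (finProdFinEquiv.injective hp)
      exact hab ⟨⟨_, h₁⟩, _, h₂⟩

end Tensor

/-- The unit vector supported on `J` with entries `± 1 / √#J`, the signs being read off `ε`. A
uniformly random `ε` makes it the random direction of a plant. -/
def unitSign {ι : Type*} (J : Finset ι) (ε : J → Bool) : ι → ℝ :=
  Function.extend Subtype.val ((√J.card)⁻¹ • (boolSign ∘ ε)) 0

lemma card_le_exp_mul_sum_exp {α : Type*} [Fintype α] (F : α → ℝ) (τ : ℝ) :
    ((Finset.univ.filter fun a => τ ≤ F a).card : ℝ) ≤ Real.exp (-τ) * ∑ a, Real.exp (F a) := by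
  rw [Real.exp_neg, ← div_eq_inv_mul, le_div_iff₀ (Real.exp_pos τ), ← nsmul_eq_mul,
    ← Finset.sum_const]
  refine (Finset.sum_le_sum fun a ha => ?_).trans
    (Finset.sum_le_sum_of_subset_of_nonneg (Finset.subset_univ _) fun _ _ _ => by positivity)
  exact Real.exp_le_exp.2 (Finset.mem_filter.1 ha).2

lemma card_le_abs_dotProduct_boolSign_le {ι : Type*} [Fintype ι] [DecidableEq ι] (c : ι → ℝ)
    {V θ : ℝ} (hV : 0 < V) (hc : sqNorm c ≤ V) (hθ : 0 ≤ θ) :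
    ((Finset.univ.filter fun ε : ι → Bool => θ ≤ |c ⬝ᵥ (boolSign ∘ ε)|).card : ℝ)
      ≤ 2 ^ Fintype.card ι * (2 * Real.exp (-(θ ^ 2 / (2 * V)))) := by
  have hone (d : ι → ℝ) (hd : sqNorm d ≤ V) :
      ((Finset.univ.filter fun ε : ι → Bool => θ ≤ d ⬝ᵥ (boolSign ∘ ε)).card : ℝ)
        ≤ 2 ^ Fintype.card ι * Real.exp (-(θ ^ 2 / (2 * V))) := by
    -- The Chernoff parameter `θ / V` minimizes `-s θ + s² V / 2`.
    have hmono (ε : ι → Bool) (hε : θ ≤ d ⬝ᵥ (boolSign ∘ ε)) :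
        θ / V * θ ≤ ((θ / V) • d) ⬝ᵥ (boolSign ∘ ε) := by
      rw [smul_dotProduct, smul_eq_mul]
      gcongr
    have hvar : sqNorm ((θ / V) • d) ≤ θ ^ 2 / V := by
      rw [sqNorm_smul]
      calc (θ / V) ^ 2 * sqNorm d ≤ (θ / V) ^ 2 * V := by gcongr
        _ = θ ^ 2 / V := by field_simp
    calc _ ≤ ((Finset.univ.filter fun ε : ι → Bool =>
            θ / V * θ ≤ ((θ / V) • d) ⬝ᵥ (boolSign ∘ ε)).card : ℝ) := by
          exact_mod_cast Finset.card_le_card (Finset.monotone_filter_right _ fun ε _ => hmono ε)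
      _ ≤ Real.exp (-(θ / V * θ)) * ∑ ε : ι → Bool,
            Real.exp (((θ / V) • d) ⬝ᵥ (boolSign ∘ ε)) := card_le_exp_mul_sum_exp _ _
      _ ≤ Real.exp (-(θ / V * θ)) * (2 ^ Fintype.card ι * Real.exp (θ ^ 2 / V / 2)) := by
          grw [sum_exp_dotProduct_boolSign_le, hvar]
      _ = _ := by
          rw [mul_left_comm, ← Real.exp_add]
          congr 2
          field_simp
          norm_num
  have hsplit : (Finset.univ.filter fun ε : ι → Bool => θ ≤ |c ⬝ᵥ (boolSign ∘ ε)|) ⊆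
      (Finset.univ.filter fun ε => θ ≤ c ⬝ᵥ (boolSign ∘ ε)) ∪
        Finset.univ.filter fun ε => θ ≤ (-c) ⬝ᵥ (boolSign ∘ ε) := fun ε => by
    simp [neg_dotProduct, le_abs]
  have hcard := (Finset.card_le_card hsplit).trans (Finset.card_union_le _ _)
  have hcard' := (Nat.cast_le (α := ℝ)).2 hcard
  push_cast at hcard'
  linarith [hone c hc, hone (-c) ((sqNorm_neg c).trans_le hc)]

section UnitSign

variable {ι : Type*} {J J' : Finset ι}

lemma unitSign_of_notMem (ε : J → Bool) {i : ι} (hi : i ∉ J) : unitSign J ε i = 0 :=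
  Function.extend_apply' _ _ _ (by simpa using hi)

variable [Fintype ι]

lemma sqNorm_unitSign (hJ : J.Nonempty) (ε : J → Bool) : sqNorm (unitSign J ε) = 1 := by
  have hcard : (J.card : ℝ) ≠ 0 := by simpa using hJ.ne_empty
  rw [unitSign, sqNorm_extend_zero Subtype.val_injective, sqNorm_smul, sqNorm_boolSign_comp,
    inv_pow, Real.sq_sqrt (Nat.cast_nonneg _), Fintype.card_coe, inv_mul_cancel₀ hcard]

lemma unitSign_dotProduct_unitSign (hJ : Disjoint J J') (ε : J → Bool) (δ : J' → Bool) :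
    unitSign J ε ⬝ᵥ unitSign J' δ = 0 := by
  refine Finset.sum_eq_zero fun i _ => ?_
  by_cases hi : i ∈ J
  · rw [unitSign_of_notMem δ (Finset.disjoint_left.1 hJ hi), mul_zero]
  · rw [unitSign_of_notMem ε hi, zero_mul]

lemma card_le_abs_dotProduct_unitSign_le [DecidableEq ι] (hJ : J.Nonempty) {x : ι → ℝ}
    (hx : sqNorm x ≤ 1) {θ : ℝ} (hθ : 0 ≤ θ) :
    ((Finset.univ.filter fun ε : J → Bool => θ ≤ |x ⬝ᵥ unitSign J ε|).card : ℝ)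
      ≤ 2 ^ J.card * (2 * Real.exp (-(J.card * θ ^ 2 / 2))) := by
  have hcard : (0 : ℝ) < J.card := by exact_mod_cast hJ.card_pos
  have hdot (ε : J → Bool) :
      x ⬝ᵥ unitSign J ε = ((√J.card)⁻¹ • (x ∘ Subtype.val)) ⬝ᵥ (boolSign ∘ ε) := by
    refine (Fintype.sum_of_injective Subtype.val Subtype.val_injective _ _
      (fun i hi => ?_) fun j => ?_).symm
    · rw [unitSign_of_notMem ε (by simpa using hi), mul_zero]
    · simp only [unitSign, Subtype.val_injective.extend_apply, Pi.smul_apply, smul_eq_mul,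
        Function.comp_apply]
      ring
  have hc : sqNorm ((√J.card)⁻¹ • (x ∘ ((↑) : J → ι))) ≤ (J.card : ℝ)⁻¹ := by
    rw [sqNorm_smul, inv_pow, Real.sq_sqrt hcard.le]
    exact mul_le_of_le_one_right (by positivity)
      ((sqNorm_comp_le Subtype.val_injective x).trans hx)
  have hmain := card_le_abs_dotProduct_boolSign_le _ (inv_pos.2 hcard) hc hθ
  simp_rw [← hdot, Fintype.card_coe] at hmain
  rwa [show θ ^ 2 / (2 * (J.card : ℝ)⁻¹) = J.card * θ ^ 2 / 2 by field_simp] at hmain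

end UnitSign

/-- The coordinates of `ℝ^{n²}` belonging to the block `J₁ × J₂` of an `n × n` matrix. -/
def blockIndex {n : ℕ} (J₁ J₂ : Finset (Fin n)) : J₁ × J₂ → Fin (n * n) :=
  finProdFinEquiv ∘ Prod.map Subtype.val Subtype.val

section Block

variable {n q : ℕ} {κ : Type*} [Fintype κ] {J₁ J₂ : Finset (Fin n)}

lemma blockIndex_injective (J₁ J₂ : Finset (Fin n)) : (blockIndex J₁ J₂).Injective :=
  finProdFinEquiv.injective.comp (Subtype.val_injective.prodMap Subtype.val_injective)

lemma sqNorm_mulVec_tensor_unitSign (h₁ : J₁.card = q) (h₂ : J₂.card = q)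
    (S : Matrix κ (Fin (n * n)) ℝ) (ε : J₁ → Bool) (δ : J₂ → Bool) :
    sqNorm (S *ᵥ tensor (unitSign J₁ ε) (unitSign J₂ δ)) = (q : ℝ)⁻¹ ^ 2 *
      sqNorm (S.submatrix id (blockIndex J₁ J₂) *ᵥ
        fun i => boolSign (ε i.1) * boolSign (δ i.2)) := by
  have hscale : (fun i : J₁ × J₂ => ((√q)⁻¹ • (boolSign ∘ ε)) i.1 * ((√q)⁻¹ • (boolSign ∘ δ)) i.2) =
      (q : ℝ)⁻¹ • fun i => boolSign (ε i.1) * boolSign (δ i.2) := by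
    ext i
    simp only [Pi.smul_apply, smul_eq_mul, Function.comp_apply]
    rw [mul_mul_mul_comm, ← mul_inv, Real.mul_self_sqrt (Nat.cast_nonneg q)]
  rw [unitSign, unitSign, tensor_extend_zero Subtype.val_injective Subtype.val_injective, h₁, h₂,
    hscale, ← sqNorm_smul, ← mulVec_smul, ← mulVec_extend_zero (blockIndex_injective J₁ J₂),
    blockIndex]

lemma card_lt_sqNorm_mulVec_tensor_unitSign_le [DecidableEq κ]
    {S : Matrix κ (Fin (n * n)) ℝ} (hS : S * Sᵀ = 1)
    (hq : 0 < q) (h₁ : J₁.card = q) (h₂ : J₂.card = q) (τ : ℝ) :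
    ((Finset.univ.filter fun p : (J₁ → Bool) × (J₂ → Bool) =>
        τ < sqNorm (S *ᵥ tensor (unitSign J₁ p.1) (unitSign J₂ p.2))).card : ℝ)
      ≤ 2 ^ q * 2 ^ q * Real.exp (-(q * τ / 8) + Fintype.card κ / (2 * q)) := by
  have hq' : (0 : ℝ) < q := by exact_mod_cast hq
  have he := blockIndex_injective J₁ J₂
  let P := S.submatrix id (blockIndex J₁ J₂)
  have hP (x : J₁ × J₂ → ℝ) : sqNorm (P *ᵥ x) ≤ sqNorm x := by
    rw [← mulVec_extend_zero he, ← sqNorm_extend_zero he]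
    exact sqNorm_mulVec_le_of_mul_transpose_eq_one hS _
  let F (p : (J₁ → Bool) × (J₂ → Bool)) : ℝ :=
    1 / (8 * q) * sqNorm (P *ᵥ fun i => boolSign (p.1 i.1) * boolSign (p.2 i.2))
  have hF (p : (J₁ → Bool) × (J₂ → Bool)) :
      q / 8 * sqNorm (S *ᵥ tensor (unitSign J₁ p.1) (unitSign J₂ p.2)) = F p := by
    rw [sqNorm_mulVec_tensor_unitSign h₁ h₂]
    simp only [F, P]
    field_simp
  have hsum : ∑ p, Real.exp (F p) ≤ 2 ^ q * (2 ^ q * Real.exp (Fintype.card κ / (2 * q))) := by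
    have hmgf := sum_exp_sqNorm_mulVec_boolSign_mul_boolSign_le hq' (by simp [h₁]) (by simp [h₂]) hP
    rw [← Fintype.sum_prod_type', Fintype.card_coe, Fintype.card_coe, h₁, h₂] at hmgf
    refine hmgf.trans ?_
    grw [frobSq_submatrix_id_le he S, frobSq_of_mul_transpose_eq_one hS]
  calc _ ≤ ((Finset.univ.filter fun p => q * τ / 8 ≤ F p).card : ℝ) := by
        refine Nat.cast_le.2 (Finset.card_le_card (Finset.monotone_filter_right _ fun p _ hp => ?_))
        rw [← hF, mul_div_right_comm]
        gcongr
    _ ≤ Real.exp (-(q * τ / 8)) * (2 ^ q * (2 ^ q * Real.exp (Fintype.card κ / (2 * q)))) := by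
        grw [card_le_exp_mul_sum_exp, hsum]
    _ = _ := by rw [Real.exp_add]; ring

end Block

/-! ### Euclidean norm and spectral norm -/

/-- The Euclidean norm on functions `ι → ℝ`, which as a type carry the supremum norm in Mathlib. -/
def euclNorm {ι : Type*} [Fintype ι] (x : ι → ℝ) : ℝ := √(sqNorm x)

section EuclNorm

variable {ι : Type*} [Fintype ι]

lemma euclNorm_eq_norm_toLp (x : ι → ℝ) : euclNorm x = ‖WithLp.toLp 2 x‖ := by
  simp [EuclideanSpace.norm_eq, euclNorm, sqNorm]

lemma euclNorm_nonneg (x : ι → ℝ) : 0 ≤ euclNorm x := Real.sqrt_nonneg _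

lemma euclNorm_sq (x : ι → ℝ) : euclNorm x ^ 2 = sqNorm x := Real.sq_sqrt (sqNorm_nonneg x)

lemma euclNorm_eq_one {x : ι → ℝ} : euclNorm x = 1 ↔ sqNorm x = 1 := Real.sqrt_eq_one

lemma euclNorm_le_iff_sqNorm_le {x : ι → ℝ} {c : ℝ} (hc : 0 ≤ c) :
    euclNorm x ≤ c ↔ sqNorm x ≤ c ^ 2 := Real.sqrt_le_left hc

@[simp]
lemma euclNorm_zero : euclNorm (0 : ι → ℝ) = 0 := by simp [euclNorm, sqNorm]

lemma euclNorm_add_le (x y : ι → ℝ) : euclNorm (x + y) ≤ euclNorm x + euclNorm y := by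
  simpa only [euclNorm_eq_norm_toLp, WithLp.toLp_add] using norm_add_le _ _

lemma euclNorm_sub_le (x y : ι → ℝ) : euclNorm (x - y) ≤ euclNorm x + euclNorm y := by
  simpa only [euclNorm_eq_norm_toLp, WithLp.toLp_sub] using norm_sub_le _ _

lemma euclNorm_smul (c : ℝ) (x : ι → ℝ) : euclNorm (c • x) = |c| * euclNorm x := by
  rw [euclNorm, sqNorm_smul, Real.sqrt_mul (sq_nonneg c), Real.sqrt_sq_eq_abs, euclNorm]

lemma euclNorm_pos {x : ι → ℝ} (hx : x ≠ 0) : 0 < euclNorm x := by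
  rw [euclNorm_eq_norm_toLp, norm_pos_iff]
  simpa using hx

lemma euclNorm_inv_smul_self {x : ι → ℝ} (hx : x ≠ 0) : euclNorm ((euclNorm x)⁻¹ • x) = 1 := by
  have hpos := euclNorm_pos hx
  rw [euclNorm_smul, abs_of_pos (inv_pos.2 hpos), inv_mul_cancel₀ hpos.ne']

lemma dotProduct_self_eq_euclNorm_sq (x : ι → ℝ) : x ⬝ᵥ x = euclNorm x ^ 2 := by
  rw [euclNorm_sq, sqNorm_eq_dotProduct]

lemma abs_dotProduct_le (x y : ι → ℝ) : |x ⬝ᵥ y| ≤ euclNorm x * euclNorm y := by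
  refine abs_le_of_sq_le_sq ?_ (mul_nonneg (euclNorm_nonneg x) (euclNorm_nonneg y))
  rw [mul_pow, euclNorm_sq, euclNorm_sq]
  exact dotProduct_sq_le_sqNorm_mul_sqNorm x y

end EuclNorm

section SpecNorm

variable {m n : Type*} [Fintype m] [Fintype n] {A : Matrix m n ℝ}

lemma sqNorm_mulVec_le_frobSq_mul_sqNorm (A : Matrix m n ℝ) (x : n → ℝ) :
    sqNorm (A *ᵥ x) ≤ frobSq A * sqNorm x := by
  rw [sqNorm, frobSq, Finset.sum_mul]
  exact Finset.sum_le_sum fun i _ => dotProduct_sq_le_sqNorm_mul_sqNorm (A i) x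

lemma specNorm_nonneg (A : Matrix m n ℝ) : 0 ≤ specNorm A := by
  refine Real.sSup_nonneg ?_
  rintro _ ⟨x, -, rfl⟩
  exact Real.sqrt_nonneg _

lemma euclNorm_mulVec_le_specNorm (A : Matrix m n ℝ) {x : n → ℝ} (hx : euclNorm x ≤ 1) :
    euclNorm (A *ᵥ x) ≤ specNorm A := by
  refine le_csSup ⟨√(frobSq A), ?_⟩ ⟨x, Real.sqrt_le_one.1 hx, rfl⟩
  rintro _ ⟨y, hy, rfl⟩
  exact Real.sqrt_le_sqrt ((sqNorm_mulVec_le_frobSq_mul_sqNorm A y).trans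
    (mul_le_of_le_one_right (frobSq_nonneg A) hy))

lemma specNorm_le {c : ℝ} (h : ∀ x, euclNorm x ≤ 1 → euclNorm (A *ᵥ x) ≤ c) : specNorm A ≤ c := by
  refine csSup_le ⟨_, 0, by simp [sqNorm], rfl⟩ ?_
  rintro _ ⟨y, hy, rfl⟩
  exact h y (Real.sqrt_le_one.2 hy)

lemma euclNorm_mulVec_le (A : Matrix m n ℝ) (x : n → ℝ) :
    euclNorm (A *ᵥ x) ≤ specNorm A * euclNorm x := by
  by_cases hx : x = 0
  · simp [hx]
  · have h := euclNorm_mulVec_le_specNorm A (euclNorm_inv_smul_self hx).le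
    have hpos := euclNorm_pos hx
    rwa [mulVec_smul, euclNorm_smul, abs_of_pos (inv_pos.2 hpos), inv_mul_le_iff₀ hpos,
      mul_comm] at h

lemma abs_dotProduct_mulVec_le (A : Matrix m n ℝ) (x : m → ℝ) (y : n → ℝ) :
    |x ⬝ᵥ (A *ᵥ y)| ≤ specNorm A * (euclNorm x * euclNorm y) := by
  refine (abs_dotProduct_le _ _).trans ?_
  have := mul_le_mul_of_nonneg_left (euclNorm_mulVec_le A y) (euclNorm_nonneg x)
  linarith

lemma specNorm_le_of_dotProduct_mulVec_le {c : ℝ} (hc : 0 ≤ c)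
    (h : ∀ x y, euclNorm x ≤ 1 → euclNorm y ≤ 1 → x ⬝ᵥ (A *ᵥ y) ≤ c) : specNorm A ≤ c := by
  refine specNorm_le fun y hy => ?_
  by_cases hAy : A *ᵥ y = 0
  · simpa [hAy] using hc
  · have hxy := h _ y (euclNorm_inv_smul_self hAy).le hy
    rwa [smul_dotProduct, dotProduct_self_eq_euclNorm_sq, smul_eq_mul, sq,
      inv_mul_cancel_left₀ (euclNorm_pos hAy).ne'] at hxy

lemma specNorm_transpose_le (A : Matrix m n ℝ) : specNorm Aᵀ ≤ specNorm A := by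
  refine specNorm_le_of_dotProduct_mulVec_le (specNorm_nonneg A) fun x y hx hy => ?_
  rw [mulVec_transpose, dotProduct_comm, ← dotProduct_mulVec]
  refine (le_abs_self _).trans ((abs_dotProduct_mulVec_le A y x).trans ?_)
  exact mul_le_of_le_one_right (specNorm_nonneg A) (mul_le_one₀ hy (euclNorm_nonneg x) hx)

end SpecNorm

/-! ### Spectral norm of a Gaussian matrix -/

/-- The inverse of `vec n`: a vector of `ℝ^{n²}` read as an `n × n` matrix. -/
def unvec {n : ℕ} (g : Fin (n * n) → ℝ) : Matrix (Fin n) (Fin n) ℝ :=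
  Matrix.of fun i j => g (finProdFinEquiv (i, j))

/-- The points of `(1 / n) ℤⁿ ∩ [-1, 1]ⁿ` of norm at most `2`, a `1 / 4`-net of the unit ball. -/
def ballGrid (n : ℕ) : Finset (Fin n → ℝ) :=
  ((Fintype.piFinset fun _ : Fin n => Finset.Icc (-n : ℤ) n).image fun z i => (z i : ℝ) / n).filter
    fun x => euclNorm x ≤ 2

/-- The event that the bilinear form of a matrix is at most `θ` on pairs of grid points. -/
def gridBounded (n : ℕ) (θ : ℝ) : Set (Fin (n * n) → ℝ) :=
  {g | ∀ p ∈ ballGrid n ×ˢ ballGrid n, tensor p.1 p.2 ⬝ᵥ g ≤ θ}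

section Grid

variable {n : ℕ}

lemma vec_unvec (g : Fin (n * n) → ℝ) : _root_.vec n (unvec g) = g := by
  funext i
  simp only [_root_.vec, unvec, of_apply, Prod.mk.eta, Equiv.apply_symm_apply]

lemma tensor_dotProduct (x y : Fin n → ℝ) (g : Fin (n * n) → ℝ) :
    tensor x y ⬝ᵥ g = x ⬝ᵥ (unvec g *ᵥ y) := by
  simp only [dotProduct, ← Equiv.sum_comp finProdFinEquiv, Fintype.sum_prod_type, tensor_apply,
    mulVec, unvec, of_apply, Finset.mul_sum]
  exact Finset.sum_congr rfl fun i _ => Finset.sum_congr rfl fun j _ => by ring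

lemma card_ballGrid_le (n : ℕ) : (ballGrid n).card ≤ (2 * n + 1) ^ n := by
  refine (Finset.card_filter_le _ _).trans (Finset.card_image_le.trans_eq ?_)
  rw [Fintype.card_piFinset_const, Int.card_Icc]
  congr 1
  omega

lemma euclNorm_le_two_of_mem_ballGrid {x : Fin n → ℝ} (hx : x ∈ ballGrid n) : euclNorm x ≤ 2 :=
  (Finset.mem_filter.1 hx).2

lemma exists_mem_ballGrid (hn : 16 ≤ n) {x : Fin n → ℝ} (hx : euclNorm x ≤ 1) :
    ∃ z ∈ ballGrid n, euclNorm (x - z) ≤ 1 / 4 := by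
  have hn₀ : (0 : ℝ) < n := by positivity
  have hcoord (i : Fin n) : |x i| ≤ 1 := by
    have h : x i ^ 2 ≤ sqNorm x :=
      Finset.single_le_sum (f := fun i => x i ^ 2) (fun _ _ => sq_nonneg _) (Finset.mem_univ i)
    exact abs_le_of_sq_le_sq
      (h.trans ((euclNorm_le_iff_sqNorm_le zero_le_one).1 hx)) zero_le_one
  let z (i : Fin n) : ℝ := (⌊n * x i⌋ : ℝ) / n
  have hz : euclNorm (x - z) ≤ 1 / 4 := by
    refine (euclNorm_le_iff_sqNorm_le (by norm_num)).2 ?_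
    calc sqNorm (x - z) ≤ ∑ _i : Fin n, (1 / (n : ℝ)) ^ 2 := by
          refine Finset.sum_le_sum fun i _ => sq_le_sq.2 ?_
          have hfract : (x - z) i = Int.fract (n * x i) / n := by
            simp only [z, Pi.sub_apply, Int.fract]
            field_simp
          rw [hfract, abs_of_nonneg (by positivity), abs_of_nonneg (by positivity)]
          gcongr
          exact (Int.fract_lt_one _).le
      _ = 1 / n := by
            rw [Finset.sum_const, Finset.card_univ, Fintype.card_fin, nsmul_eq_mul]
            field_simp
      _ ≤ (1 / 4) ^ 2 := by
          have : (16 : ℝ) ≤ n := by exact_mod_cast hn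
          rw [div_le_iff₀ hn₀]
          linarith
  refine ⟨z, Finset.mem_filter.2 ⟨Finset.mem_image.2 ⟨fun i => ⌊n * x i⌋, ?_, rfl⟩, ?_⟩, hz⟩
  · refine Fintype.mem_piFinset.2 fun i => Finset.mem_Icc.2 ?_
    obtain ⟨hlow, hupp⟩ := abs_le.1 (hcoord i)
    constructor
    · rw [Int.le_floor]
      push_cast
      nlinarith
    · rw [Int.floor_le_iff]
      push_cast
      nlinarith
  · have := euclNorm_sub_le x (x - z)
    rw [sub_sub_cancel] at this
    linarith

lemma measurableSet_gridBounded (n : ℕ) (θ : ℝ) : MeasurableSet (gridBounded n θ) := by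
  have : gridBounded n θ = ⋂ p ∈ ballGrid n ×ˢ ballGrid n, {g | tensor p.1 p.2 ⬝ᵥ g ≤ θ} := by
    ext g
    simp only [gridBounded, Set.mem_iInter]
    rfl
  rw [this]
  exact Finset.measurableSet_biInter _ fun p _ => measurableSet_le (by fun_prop) measurable_const

lemma specNorm_unvec_le_of_mem_gridBounded (hn : 16 ≤ n) {θ : ℝ} (hθ : 0 ≤ θ)
    {g : Fin (n * n) → ℝ} (hg : g ∈ gridBounded n θ) : specNorm (unvec g) ≤ 4 * θ := by
  have hM := specNorm_nonneg (unvec g)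
  suffices specNorm (unvec g) ≤ θ + 3 / 4 * specNorm (unvec g) by linarith
  refine specNorm_le_of_dotProduct_mulVec_le (by positivity) fun x y hx hy => ?_
  obtain ⟨x', hx', hxx'⟩ := exists_mem_ballGrid hn hx
  obtain ⟨y', hy', hyy'⟩ := exists_mem_ballGrid hn hy
  have hsplit : x ⬝ᵥ (unvec g *ᵥ y) = x' ⬝ᵥ (unvec g *ᵥ y') + (x - x') ⬝ᵥ (unvec g *ᵥ y)
      + x' ⬝ᵥ (unvec g *ᵥ (y - y')) := by
    rw [mulVec_sub, sub_dotProduct, dotProduct_sub]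
    ring
  have hgrid : x' ⬝ᵥ (unvec g *ᵥ y') ≤ θ := by
    rw [← tensor_dotProduct]
    exact hg (x', y') (Finset.mk_mem_product hx' hy')
  have hleft : (x - x') ⬝ᵥ (unvec g *ᵥ y) ≤ specNorm (unvec g) * (1 / 4 * 1) := by
    refine (le_abs_self _).trans ((abs_dotProduct_mulVec_le _ _ _).trans ?_)
    gcongr
    exact euclNorm_nonneg y
  have hright : x' ⬝ᵥ (unvec g *ᵥ (y - y')) ≤ specNorm (unvec g) * (2 * (1 / 4)) := by
    refine (le_abs_self _).trans ((abs_dotProduct_mulVec_le _ _ _).trans ?_)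
    gcongr
    · exact euclNorm_nonneg _
    · exact euclNorm_le_two_of_mem_ballGrid hx'
  linarith

end Grid

lemma stdGaussian_lt_dotProduct_le {ι : Type*} [Fintype ι] {c : ι → ℝ} {V θ : ℝ} (hV : 0 < V)
    (hc : sqNorm c ≤ V) (hθ : 0 ≤ θ) :
    γ ι {g | θ < c ⬝ᵥ g} ≤ ENNReal.ofReal (Real.exp (-(θ ^ 2 / (2 * V)))) := by
  let F (g : ι → ℝ) : ℝ≥0∞ := ENNReal.ofReal (Real.exp (((θ / V) • c) ⬝ᵥ g))
  have hpos : ENNReal.ofReal (Real.exp (θ / V * θ)) ≠ 0 := by simpa using Real.exp_pos _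
  have hsub : {g : ι → ℝ | θ < c ⬝ᵥ g} ⊆ {g | ENNReal.ofReal (Real.exp (θ / V * θ)) ≤ F g} := by
    intro g (hg : θ < c ⬝ᵥ g)
    refine ENNReal.ofReal_le_ofReal (Real.exp_le_exp.2 ?_)
    rw [smul_dotProduct, smul_eq_mul]
    gcongr
  have hmarkov := (measure_mono hsub).trans
    (meas_ge_le_lintegral_div (μ := γ ι) (f := F) (by fun_prop) hpos ENNReal.ofReal_ne_top)
  refine hmarkov.trans ?_
  rw [lintegral_exp_dotProduct_stdGaussian, ← ENNReal.ofReal_div_of_pos (Real.exp_pos _),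
    ← Real.exp_sub, sqNorm_smul]
  refine ENNReal.ofReal_le_ofReal (Real.exp_le_exp.2 ?_)
  calc (θ / V) ^ 2 * sqNorm c / 2 - θ / V * θ ≤ (θ / V) ^ 2 * V / 2 - θ / V * θ := by gcongr
    _ = -(θ ^ 2 / (2 * V)) := by field_simp; ring

lemma stdGaussian_compl_gridBounded_le (n : ℕ) {θ : ℝ} (hθ : 0 ≤ θ) :
    γ (Fin (n * n)) (gridBounded n θ)ᶜ
      ≤ ENNReal.ofReal ((2 * n + 1) ^ (2 * n) * Real.exp (-(θ ^ 2 / 32))) := by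
  have hunion : (gridBounded n θ)ᶜ =
      ⋃ p ∈ ballGrid n ×ˢ ballGrid n, {g | θ < tensor p.1 p.2 ⬝ᵥ g} := by
    ext g
    simp only [gridBounded, Set.mem_compl_iff, Set.mem_iUnion, exists_prop]
    change ¬ (∀ p ∈ _, _ ≤ θ) ↔ ∃ p, _ ∧ θ < _
    push Not
    rfl
  have htail (p : (Fin n → ℝ) × (Fin n → ℝ)) (hp : p ∈ ballGrid n ×ˢ ballGrid n) :
      γ (Fin (n * n)) {g | θ < tensor p.1 p.2 ⬝ᵥ g}
        ≤ ENNReal.ofReal (Real.exp (-(θ ^ 2 / 32))) := by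
    obtain ⟨h₁, h₂⟩ := Finset.mem_product.1 hp
    have hnorm : sqNorm (tensor p.1 p.2) ≤ 16 := by
      rw [sqNorm_tensor, ← euclNorm_sq, ← euclNorm_sq, show (16 : ℝ) = 2 ^ 2 * 2 ^ 2 by norm_num]
      gcongr <;> first | exact euclNorm_nonneg _ | exact euclNorm_le_two_of_mem_ballGrid ‹_›
    convert stdGaussian_lt_dotProduct_le (by norm_num) hnorm hθ using 5
    norm_num
  have hcard : ((ballGrid n ×ˢ ballGrid n).card : ℝ) ≤ (2 * n + 1) ^ (2 * n) := by
    rw [Finset.card_product, mul_comm 2 n, pow_mul, sq]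
    have := card_ballGrid_le n
    exact_mod_cast Nat.mul_le_mul this this
  calc _ ≤ ∑ p ∈ ballGrid n ×ˢ ballGrid n, ENNReal.ofReal (Real.exp (-(θ ^ 2 / 32))) := by
        rw [hunion]
        exact (measure_biUnion_finset_le _ _).trans (Finset.sum_le_sum htail)
    _ = ENNReal.ofReal ((ballGrid n ×ˢ ballGrid n).card * Real.exp (-(θ ^ 2 / 32))) := by
        rw [Finset.sum_const, nsmul_eq_mul, ENNReal.ofReal_mul (Nat.cast_nonneg _),
          ENNReal.ofReal_natCast]
    _ ≤ _ := ENNReal.ofReal_le_ofReal (by gcongr)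

/-! ### Singular values and star projections -/

section StarProjection

variable {m ι : Type*} [Fintype ι] {A : Matrix m ι ℝ}
  {E P : Matrix ι ι ℝ} {w : ι → ℝ} {c : ℝ} {i : ℕ}

lemma mulVec_mulVec_of_isStarProjection (hP : IsStarProjection P) (x : ι → ℝ) :
    P *ᵥ P *ᵥ x = P *ᵥ x := by
  rw [mulVec_mulVec, hP.isIdempotentElem.eq]

lemma mulVec_dotProduct_of_isStarProjection (hP : IsStarProjection P) (x y : ι → ℝ) :
    P *ᵥ x ⬝ᵥ y = x ⬝ᵥ P *ᵥ y := by
  have hPt : Pᵀ = P := by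
    rw [← conjTranspose_eq_transpose_of_trivial, ← star_eq_conjTranspose,
      hP.isSelfAdjoint.star_eq]
  rw [dotProduct_comm, ← dotProduct_transpose_mulVec, hPt]

lemma dotProduct_mulVec_self_of_isStarProjection (hP : IsStarProjection P) (x : ι → ℝ) :
    x ⬝ᵥ P *ᵥ x = euclNorm (P *ᵥ x) ^ 2 := by
  rw [← dotProduct_self_eq_euclNorm_sq, mulVec_dotProduct_of_isStarProjection hP,
    mulVec_mulVec_of_isStarProjection hP]

lemma euclNorm_mulVec_le_of_isStarProjection (hP : IsStarProjection P) (x : ι → ℝ) :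
    euclNorm (P *ᵥ x) ≤ euclNorm x := by
  have h := (le_abs_self _).trans (abs_dotProduct_le x (P *ᵥ x))
  rw [dotProduct_mulVec_self_of_isStarProjection hP] at h
  nlinarith [euclNorm_nonneg x, euclNorm_nonneg (P *ᵥ x)]

lemma rank_eq_trace_of_isStarProjection (hP : IsStarProjection P) : (P.rank : ℝ) = P.trace := by
  have hidem : IsIdempotentElem (toLin' P) := by
    rw [IsIdempotentElem, Module.End.mul_eq_comp, ← toLin'_mul, hP.isIdempotentElem.eq]
  rw [← trace_toLin'_eq, (LinearMap.IsIdempotentElem.isProj_range _ hidem).trace]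
  rfl

lemma rank_one_sub_of_isStarProjection [DecidableEq ι] (hP : IsStarProjection P) :
    (1 - P).rank = Fintype.card ι - P.rank := by
  have h : ((1 - P).rank : ℝ) + P.rank = Fintype.card ι := by
    rw [rank_eq_trace_of_isStarProjection hP, rank_eq_trace_of_isStarProjection hP.one_sub,
      trace_sub, trace_one, sub_add_cancel]
  have h' : (1 - P).rank + P.rank = Fintype.card ι := by exact_mod_cast h
  omega

lemma isStarProjection_vecMulVec (hw : euclNorm w = 1) : IsStarProjection (vecMulVec w w) := by
  constructor
  · rw [IsIdempotentElem, vecMulVec_mul_vecMulVec, dotProduct_self_eq_euclNorm_sq, hw, one_pow,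
      one_smul]
  · rw [isSelfAdjoint_iff, star_eq_conjTranspose, conjTranspose_eq_transpose_of_trivial,
      transpose_vecMulVec]

lemma isStarProjection_add_vecMulVec (hE : IsStarProjection E) (hw : euclNorm w = 1)
    (hEw : E *ᵥ w = 0) : IsStarProjection (E + vecMulVec w w) :=
  hE.add (isStarProjection_vecMulVec hw) (by rw [mul_vecMulVec, hEw, zero_vecMulVec])

lemma rank_add_vecMulVec (hE : IsStarProjection E) (hw : euclNorm w = 1) (hEw : E *ᵥ w = 0) :
    (E + vecMulVec w w).rank = E.rank + 1 := by
  have h : ((E + vecMulVec w w).rank : ℝ) = E.rank + 1 := by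
    rw [rank_eq_trace_of_isStarProjection (isStarProjection_add_vecMulVec hE hw hEw),
      rank_eq_trace_of_isStarProjection hE, trace_add, trace_vecMulVec,
      dotProduct_self_eq_euclNorm_sq, hw, one_pow]
  exact_mod_cast h

lemma exists_mulVec_eq_zero_of_rank_lt {X : Matrix m ι ℝ} (h : X.rank < P.rank) :
    ∃ x, X *ᵥ P *ᵥ x = 0 ∧ P *ᵥ x ≠ 0 := by
  by_contra! hker
  have hle : LinearMap.ker (X * P).mulVecLin ≤ LinearMap.ker P.mulVecLin := fun x hx => by
    rw [LinearMap.mem_ker, mulVecLin_apply] at hx ⊢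
    exact hker x (by rw [mulVec_mulVec, hx])
  have h₁ := LinearMap.finrank_range_add_finrank_ker (X * P).mulVecLin
  have h₂ := LinearMap.finrank_range_add_finrank_ker P.mulVecLin
  have h₃ := Submodule.finrank_mono hle
  have h₄ : (X * P).rank ≤ X.rank := rank_mul_le_left X P
  simp only [rank] at h h₄
  omega

variable [Fintype m]

lemma singVal_le_of_isStarProjection (hP : IsStarProjection P) (hc : 0 ≤ c)
    (hrank : Fintype.card ι < P.rank + i)
    (h : ∀ x, P *ᵥ x = x → euclNorm (A *ᵥ x) ≤ c * euclNorm x) : singVal A i ≤ c := by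
  have hbdd : BddBelow {c | ∃ X : Matrix m ι ℝ, X.rank ≤ i - 1 ∧ c = specNorm (A - X)} := by
    refine ⟨0, ?_⟩
    rintro _ ⟨Y, -, rfl⟩
    exact specNorm_nonneg _
  have hX : (A * (1 - P)).rank ≤ i - 1 := by
    refine (rank_mul_le_right _ _).trans ?_
    rw [rank_one_sub_of_isStarProjection hP]
    omega
  refine (csInf_le hbdd ⟨A * (1 - P), hX, rfl⟩).trans (specNorm_le fun x hx => ?_)
  rw [Matrix.mul_sub, Matrix.mul_one, sub_sub_cancel, ← mulVec_mulVec]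
  exact (h _ (mulVec_mulVec_of_isStarProjection hP x)).trans (mul_le_of_le_one_right hc
    ((euclNorm_mulVec_le_of_isStarProjection hP x).trans hx))

lemma le_singVal_of_isStarProjection (hP : IsStarProjection P) (hi : 1 ≤ i) (hrank : i ≤ P.rank)
    (h : ∀ x, P *ᵥ x = x → c * euclNorm x ≤ euclNorm (A *ᵥ x)) : c ≤ singVal A i := by
  refine le_csInf ⟨_, 0, by simp, rfl⟩ ?_
  rintro _ ⟨X, hX, rfl⟩
  obtain ⟨x, hXx, hx⟩ := exists_mulVec_eq_zero_of_rank_lt (X := X) (P := P) (by omega)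
  have hle := euclNorm_mulVec_le (A - X) (P *ᵥ x)
  rw [sub_mulVec, hXx, sub_zero] at hle
  exact le_of_mul_le_mul_right ((h _ (mulVec_mulVec_of_isStarProjection hP x)).trans hle)
    (euclNorm_pos hx)

end StarProjection

section SingularPair

variable {ι : Type*} [Fintype ι] {D E X : Matrix ι ι ℝ} {σ d : ℝ} {x y : ι → ℝ}

lemma dotProduct_mulVec_add_dotProduct_transpose_mulVec_le (hx : euclNorm x = 1)
    (hy : euclNorm y = 1) (z : ι → ℝ) :
    |z ⬝ᵥ X *ᵥ y| + |z ⬝ᵥ Xᵀ *ᵥ x| ≤ 2 * specNorm X * euclNorm z := by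
  have h₁ := abs_dotProduct_mulVec_le X z y
  have h₂ := abs_dotProduct_mulVec_le Xᵀ z x
  rw [hy, mul_one] at h₁
  rw [hx, mul_one] at h₂
  have := mul_le_mul_of_nonneg_right (specNorm_transpose_le X) (euclNorm_nonneg z)
  linarith

lemma mul_euclNorm_sub_le_of_singular_pair (hD : ∀ z, 0 ≤ z ⬝ᵥ D *ᵥ z)
    (hx : euclNorm x = 1) (hy : euclNorm y = 1) (hxy : (D + X) *ᵥ y = σ • x)
    (hyx : (D + Xᵀ) *ᵥ x = σ • y) : σ * euclNorm (x - y) ≤ 2 * specNorm X := by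
  rcases eq_or_ne (x - y) 0 with h₀ | h₀
  · rw [h₀, euclNorm_zero, mul_zero]
    linarith [specNorm_nonneg X]
  refine le_of_mul_le_mul_right ?_ (euclNorm_pos h₀)
  have hX := dotProduct_mulVec_add_dotProduct_transpose_mulVec_le (X := X) hx hy (x - y)
  have hDz := hD (x - y)
  have hσ : σ * euclNorm (x - y) ^ 2 = (x - y) ⬝ᵥ ((D + X) *ᵥ y - (D + Xᵀ) *ᵥ x) := by
    rw [hxy, hyx, ← smul_sub, dotProduct_smul, ← dotProduct_self_eq_euclNorm_sq, smul_eq_mul]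
  have hsplit : (x - y) ⬝ᵥ ((D + X) *ᵥ y - (D + Xᵀ) *ᵥ x)
      = -((x - y) ⬝ᵥ D *ᵥ (x - y)) + (x - y) ⬝ᵥ X *ᵥ y - (x - y) ⬝ᵥ Xᵀ *ᵥ x := by
    simp only [add_mulVec, mulVec_sub, dotProduct_sub, dotProduct_add]
    ring
  have := le_abs_self ((x - y) ⬝ᵥ X *ᵥ y)
  have := neg_le_abs ((x - y) ⬝ᵥ Xᵀ *ᵥ x)
  linarith

lemma mul_euclNorm_mulVec_add_le_of_singular_pair (hE : IsStarProjection E) (hED : E * D = d • E)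
    (hx : euclNorm x = 1) (hy : euclNorm y = 1) (hxy : (D + X) *ᵥ y = σ • x)
    (hyx : (D + Xᵀ) *ᵥ x = σ • y) :
    |σ - d| * euclNorm (E *ᵥ (x + y)) ≤ 2 * specNorm X := by
  have hproj : (σ - d) • E *ᵥ (x + y) = E *ᵥ (X *ᵥ y + Xᵀ *ᵥ x) := by
    have hEDz (z : ι → ℝ) : E *ᵥ D *ᵥ z = d • E *ᵥ z := by rw [mulVec_mulVec, hED, smul_mulVec]
    have h₁ : σ • E *ᵥ x = d • E *ᵥ y + E *ᵥ X *ᵥ y := by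
      rw [← mulVec_smul, ← hxy, add_mulVec, mulVec_add, hEDz]
    have h₂ : σ • E *ᵥ y = d • E *ᵥ x + E *ᵥ Xᵀ *ᵥ x := by
      rw [← mulVec_smul, ← hyx, add_mulVec, mulVec_add, hEDz]
    rw [mulVec_add, mulVec_add, sub_smul, smul_add, smul_add, h₁, h₂]
    abel
  rw [← euclNorm_smul, hproj]
  have h₁ := euclNorm_mulVec_le X y
  have h₂ := euclNorm_mulVec_le Xᵀ x
  rw [hy, mul_one] at h₁
  rw [hx, mul_one] at h₂
  linarith [euclNorm_mulVec_le_of_isStarProjection hE (X *ᵥ y + Xᵀ *ᵥ x),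
    euclNorm_add_le (X *ᵥ y) (Xᵀ *ᵥ x), specNorm_transpose_le X]

lemma mul_euclNorm_add_sq_of_singular_pair (hxy : (D + X) *ᵥ y = σ • x)
    (hyx : (D + Xᵀ) *ᵥ x = σ • y) :
    σ * euclNorm (x + y) ^ 2
      = (x + y) ⬝ᵥ D *ᵥ (x + y) + ((x + y) ⬝ᵥ X *ᵥ y + x ⬝ᵥ X *ᵥ (x + y)) := by
  calc σ * euclNorm (x + y) ^ 2 = (x + y) ⬝ᵥ ((D + X) *ᵥ y + (D + Xᵀ) *ᵥ x) := by
        rw [hxy, hyx, ← smul_add, dotProduct_smul, ← dotProduct_self_eq_euclNorm_sq, smul_eq_mul]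
    _ = _ := by
        rw [← dotProduct_transpose_mulVec X (x + y) x]
        simp only [add_mulVec, mulVec_add, dotProduct_add]
        ring

lemma euclNorm_add_sq_add_euclNorm_sub_sq (x y : ι → ℝ) :
    euclNorm (x + y) ^ 2 + euclNorm (x - y) ^ 2 = 2 * (euclNorm x ^ 2 + euclNorm y ^ 2) := by
  simpa only [euclNorm_eq_norm_toLp, WithLp.toLp_add, WithLp.toLp_sub, sq] using
    parallelogram_law_with_norm ℝ (WithLp.toLp 2 x) (WithLp.toLp 2 y)

lemma abs_dotProduct_mulVec_add_sub_le (hx : euclNorm x = 1) (hy : euclNorm y = 1) :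
    |(x + y) ⬝ᵥ X *ᵥ y + x ⬝ᵥ X *ᵥ (x + y) - (x + y) ⬝ᵥ X *ᵥ (x + y)|
      ≤ 2 * (specNorm X * euclNorm (x - y)) := by
  have hpol : (x + y) ⬝ᵥ X *ᵥ y + x ⬝ᵥ X *ᵥ (x + y) - (x + y) ⬝ᵥ X *ᵥ (x + y)
      = ((x - y) ⬝ᵥ X *ᵥ (x + y) - (x + y) ⬝ᵥ X *ᵥ (x - y)) / 2 := by
    simp only [mulVec_add, mulVec_sub, dotProduct_add, add_dotProduct, dotProduct_sub,
      sub_dotProduct]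
    ring
  have hadd : euclNorm (x + y) ≤ 2 := by linarith [euclNorm_add_le x y]
  have hle : specNorm X * (euclNorm (x - y) * euclNorm (x + y))
      ≤ 2 * (specNorm X * euclNorm (x - y)) := by
    have := mul_le_mul_of_nonneg_left hadd
      (mul_nonneg (specNorm_nonneg X) (euclNorm_nonneg (x - y)))
    linarith
  have h₁ := abs_dotProduct_mulVec_le X (x - y) (x + y)
  have h₂ := abs_dotProduct_mulVec_le X (x + y) (x - y)
  rw [mul_comm (euclNorm (x + y))] at h₂
  rw [hpol, abs_div, abs_two]
  linarith [abs_sub ((x - y) ⬝ᵥ X *ᵥ (x + y)) ((x + y) ⬝ᵥ X *ᵥ (x - y))]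

end SingularPair

section Spike

variable {ι : Type*} [Fintype ι] {E G : Matrix ι ι ℝ} {η s : ℝ} {u v w p : ι → ℝ}

lemma dotProduct_add_smul_vecMulVec_mulVec (G : Matrix ι ι ℝ) (s : ℝ) (u v x y : ι → ℝ) :
    x ⬝ᵥ (G + s • vecMulVec u v) *ᵥ y = x ⬝ᵥ G *ᵥ y + s * ((x ⬝ᵥ u) * (v ⬝ᵥ y)) := by
  rw [add_mulVec, dotProduct_add, smul_mulVec, dotProduct_smul, smul_eq_mul, vecMulVec_mulVec,
    op_smul_eq_smul, dotProduct_smul, smul_eq_mul, mul_comm (v ⬝ᵥ y)]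

lemma specNorm_add_smul_vecMulVec_le (hs : 0 ≤ s) (hG : specNorm G ≤ s / 1000)
    (hu : euclNorm u = 1) (hv : euclNorm v = 1) : specNorm (G + s • vecMulVec u v) ≤ 2 * s := by
  refine specNorm_le fun x hx => ?_
  have hvx := abs_dotProduct_le v x
  have hsvx := mul_le_mul_of_nonneg_left hvx hs
  rw [add_mulVec, smul_mulVec, vecMulVec_mulVec, op_smul_eq_smul]
  refine (euclNorm_add_le _ _).trans ?_
  rw [euclNorm_smul, euclNorm_smul, abs_of_nonneg hs, hu, mul_one]
  rw [hv, one_mul] at hsvx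
  have := mul_le_mul_of_nonneg_left hx hs
  linarith [euclNorm_mulVec_le_specNorm G hx]

lemma euclNorm_sq_of_add_vecMulVec_mulVec_eq (hE : IsStarProjection E)
    (hp : (E + vecMulVec w w) *ᵥ p = p) :
    euclNorm p ^ 2 = euclNorm (E *ᵥ p) ^ 2 + (w ⬝ᵥ p) ^ 2 := by
  have h := congrArg (p ⬝ᵥ ·) hp
  simp only [add_mulVec, vecMulVec_mulVec, dotProduct_add, op_smul_eq_smul, dotProduct_smul,
    smul_eq_mul, dotProduct_mulVec_self_of_isStarProjection hE, dotProduct_self_eq_euclNorm_sq,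
    dotProduct_comm p w] at h
  rw [← h, sq (w ⬝ᵥ p)]

lemma dotProduct_of_add_vecMulVec_mulVec_eq (hE : IsStarProjection E)
    (hp : (E + vecMulVec w w) *ᵥ p = p) (hEu : E *ᵥ u = 0) :
    u ⬝ᵥ p = (w ⬝ᵥ p) * (u ⬝ᵥ w) := by
  have h := congrArg (u ⬝ᵥ ·) hp
  simp only [add_mulVec, vecMulVec_mulVec, dotProduct_add, op_smul_eq_smul, dotProduct_smul,
    smul_eq_mul, ← mulVec_dotProduct_of_isStarProjection hE, hEu, zero_dotProduct, zero_add] at h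
  exact h.symm

lemma euclNorm_smul_add_sq (hw : euclNorm w = 1) (c : ℝ) (y : ι → ℝ) :
    euclNorm (c • w + y) ^ 2 = c ^ 2 + 2 * c * (w ⬝ᵥ y) + euclNorm y ^ 2 := by
  simp only [← dotProduct_self_eq_euclNorm_sq, add_dotProduct, dotProduct_add, smul_dotProduct,
    dotProduct_smul, smul_eq_mul, dotProduct_comm y w]
  rw [dotProduct_self_eq_euclNorm_sq w, hw]
  ring

lemma exists_bisector (hη : η = 1 ∨ η = -1) (hu : euclNorm u = 1) (hv : euclNorm v = 1)
    (huv : u ⬝ᵥ v = 0) (hEu : E *ᵥ u = 0) (hEv : E *ᵥ v = 0) :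
    ∃ w, euclNorm w = 1 ∧ E *ᵥ w = 0 ∧ (u ⬝ᵥ w) * (v ⬝ᵥ w) = η / 2 := by
  have hr : (√2)⁻¹ ^ 2 = (1 : ℝ) / 2 := by rw [inv_pow, Real.sq_sqrt zero_le_two, one_div]
  have hη₂ : η ^ 2 = 1 := sq_eq_one_iff.2 hη
  have huu : u ⬝ᵥ u = 1 := by rw [dotProduct_self_eq_euclNorm_sq, hu, one_pow]
  have hvv : v ⬝ᵥ v = 1 := by rw [dotProduct_self_eq_euclNorm_sq, hv, one_pow]
  have hvu : v ⬝ᵥ u = 0 := by rw [dotProduct_comm, huv]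
  refine ⟨(√2)⁻¹ • (u + η • v), ?_, ?_, ?_⟩
  · rw [← pow_eq_one_iff_of_nonneg (euclNorm_nonneg _) two_ne_zero,
      ← dotProduct_self_eq_euclNorm_sq]
    simp only [smul_dotProduct, dotProduct_smul, add_dotProduct, dotProduct_add, smul_eq_mul,
      huu, hvv, huv, hvu]
    linear_combination (1 + η ^ 2) * hr + hη₂ / 2
  · rw [mulVec_smul, mulVec_add, mulVec_smul, hEu, hEv, smul_zero, add_zero, smul_zero]
  · simp only [dotProduct_smul, dotProduct_add, smul_eq_mul, huu, hvv, huv, hvu]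
    linear_combination η * hr

end Spike

section Planted

variable {ι : Type*} [Fintype ι] [DecidableEq ι] {E G : Matrix ι ι ℝ} {η s σ : ℝ}
  {u v w p x y : ι → ℝ} {i : ℕ}

/-- The diagonal part of the hard input: a multiple of the identity which, on the range of the
projection `E`, is doubled if `η = 1` and removed if `η = -1`. This puts the `i`-th singular
value of the hard input at the edge of the unperturbed level `10000 * s`. -/
def plantBase (E : Matrix ι ι ℝ) (η s : ℝ) : Matrix ι ι ℝ :=
  (10000 * s) • (1 : Matrix ι ι ℝ) + (η * (10000 * s)) • E

/-- The hard input: the base matrix, the noise `G`, and the spike `s u vᵀ`. -/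
def planted (E : Matrix ι ι ℝ) (η s : ℝ) (G : Matrix ι ι ℝ) (u v : ι → ℝ) : Matrix ι ι ℝ :=
  plantBase E η s + (G + s • vecMulVec u v)

lemma plantBase_mulVec (E : Matrix ι ι ℝ) (η s : ℝ) (x : ι → ℝ) :
    plantBase E η s *ᵥ x = (10000 * s) • x + (η * (10000 * s)) • E *ᵥ x := by
  rw [plantBase, add_mulVec, smul_mulVec, smul_mulVec, one_mulVec]

lemma dotProduct_plantBase_mulVec (hE : IsStarProjection E) (η s : ℝ) (x : ι → ℝ) :
    x ⬝ᵥ plantBase E η s *ᵥ x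
      = 10000 * s * euclNorm x ^ 2 + η * (10000 * s) * euclNorm (E *ᵥ x) ^ 2 := by
  rw [plantBase_mulVec, dotProduct_add, dotProduct_smul, dotProduct_smul,
    dotProduct_self_eq_euclNorm_sq, dotProduct_mulVec_self_of_isStarProjection hE, smul_eq_mul,
    smul_eq_mul]

lemma mul_plantBase (hE : IsStarProjection E) (η s : ℝ) :
    E * plantBase E η s = ((1 + η) * (10000 * s)) • E := by
  rw [plantBase, mul_add, mul_smul_comm, mul_smul_comm, mul_one, hE.isIdempotentElem.eq,
    ← add_smul]
  ring_nf

lemma transpose_planted (hE : IsStarProjection E) (η s : ℝ) (G : Matrix ι ι ℝ) (u v : ι → ℝ) :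
    (planted E η s G u v)ᵀ = plantBase E η s + (G + s • vecMulVec u v)ᵀ := by
  have hEt : Eᵀ = E := by
    rw [← conjTranspose_eq_transpose_of_trivial, ← star_eq_conjTranspose,
      hE.isSelfAdjoint.star_eq]
  simp [planted, plantBase, hEt]

lemma planted_pair_near (hE : IsStarProjection E) (hs : 0 < s) (hη : η = 1 ∨ η = -1)
    (hG : specNorm G ≤ s / 1000) (hu : euclNorm u = 1) (hv : euclNorm v = 1)
    (hσ : |σ - 10000 * s| ≤ 2 * s) (hx : euclNorm x = 1) (hy : euclNorm y = 1)
    (hxy : planted E η s G u v *ᵥ y = σ • x) (hyx : (planted E η s G u v)ᵀ *ᵥ x = σ • y) :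
    euclNorm (x - y) ≤ 1 / 2000 ∧ euclNorm (E *ᵥ (x + y)) ≤ 1 / 2000 := by
  have hX := specNorm_add_smul_vecMulVec_le hs.le hG hu hv
  rw [transpose_planted hE] at hyx
  obtain ⟨hσ₁, hσ₂⟩ := abs_le.1 hσ
  have hgap : 9998 * s ≤ |σ - (1 + η) * (10000 * s)| := by
    rcases hη with rfl | rfl
    · exact le_abs.2 (Or.inr (by linarith))
    · exact le_abs.2 (Or.inl (by linarith))
  have hbase (z : ι → ℝ) : 0 ≤ z ⬝ᵥ plantBase E η s *ᵥ z := by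
    have hEz := pow_le_pow_left₀ (euclNorm_nonneg _)
      (euclNorm_mulVec_le_of_isStarProjection hE z) 2
    have := mul_le_mul_of_nonneg_left hEz hs.le
    have := mul_nonneg hs.le (sq_nonneg (euclNorm (E *ᵥ z)))
    rw [dotProduct_plantBase_mulVec hE]
    rcases hη with rfl | rfl <;> linarith
  have hsub := mul_euclNorm_sub_le_of_singular_pair hbase hx hy hxy hyx
  have hadd := mul_euclNorm_mulVec_add_le_of_singular_pair hE (mul_plantBase hE η s) hx hy hxy hyx
  have bound {a r : ℝ} (ha : 9998 * s ≤ a) (hr : 0 ≤ r) (h : a * r ≤ 4 * s) : r ≤ 1 / 2000 := by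
    have := mul_le_mul_of_nonneg_right ha hr
    exact le_of_mul_le_mul_left (by linarith) (show 0 < 9998 * s by positivity)
  exact ⟨bound (a := σ) (by linarith) (euclNorm_nonneg _) (by linarith),
    bound hgap (euclNorm_nonneg _) (by linarith)⟩

lemma planted_pair_spike (hE : IsStarProjection E) (hs : 0 < s) (hη : η = 1 ∨ η = -1)
    (hG : specNorm G ≤ s / 1000) (hu : euclNorm u = 1) (hv : euclNorm v = 1)
    (hσ₁ : 9 / 20 * s ≤ η * (σ - 10000 * s)) (hσ₂ : η * (σ - 10000 * s) ≤ 2 * s)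
    (hx : euclNorm x = 1) (hy : euclNorm y = 1)
    (hxy : planted E η s G u v *ᵥ y = σ • x) (hyx : (planted E η s G u v)ᵀ *ᵥ x = σ • y) :
    17 / 10 ≤ |((x + y) ⬝ᵥ u) * (v ⬝ᵥ (x + y))| := by
  have hX := specNorm_add_smul_vecMulVec_le hs.le hG hu hv
  have hσ : |σ - 10000 * s| ≤ 2 * s :=
    abs_le.2 (by constructor <;> rcases hη with rfl | rfl <;> linarith)
  obtain ⟨hsub, hEadd⟩ := planted_pair_near hE hs hη hG hu hv hσ hx hy hxy hyx
  rw [transpose_planted hE] at hyx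
  have hsum := mul_euclNorm_add_sq_of_singular_pair hxy hyx
  have hpol := abs_dotProduct_mulVec_add_sub_le (X := G + s • vecMulVec u v) hx hy
  have hGz := abs_dotProduct_mulVec_le G (x + y) (x + y)
  have hpar := euclNorm_add_sq_add_euclNorm_sub_sq x y
  rw [dotProduct_plantBase_mulVec hE] at hsum
  rw [dotProduct_add_smul_vecMulVec_mulVec G s u v (x + y) (x + y)] at hpol
  rw [hx, hy] at hpar
  have hsub₂ := pow_le_pow_left₀ (euclNorm_nonneg _) hsub 2
  have hEadd₂ := mul_le_mul_of_nonneg_left (pow_le_pow_left₀ (euclNorm_nonneg _) hEadd 2) hs.le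
  have hXsub := mul_le_mul hX hsub (euclNorm_nonneg _) (by positivity)
  have hGle := mul_le_mul_of_nonneg_right hG (sq_nonneg (euclNorm (x + y)))
  have hlow := mul_le_mul_of_nonneg_right hσ₁ (sq_nonneg (euclNorm (x + y)))
  have hsN : s * (4 - (1 / 2000) ^ 2) ≤ s * euclNorm (x + y) ^ 2 := by gcongr; linarith
  rw [← sq] at hGz
  obtain ⟨hpol₁, hpol₂⟩ := abs_le.1 hpol
  obtain ⟨hGz₁, hGz₂⟩ := abs_le.1 hGz
  rcases hη with rfl | rfl
  · exact le_abs.2 (Or.inl (le_of_mul_le_mul_left (by linarith) hs))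
  · exact le_abs.2 (Or.inr (le_of_mul_le_mul_left (by linarith) hs))

lemma le_abs_dotProduct_of_planted_pair (hE : IsStarProjection E) (hs : 0 < s)
    (hη : η = 1 ∨ η = -1) (hG : specNorm G ≤ s / 1000) (hu : euclNorm u = 1)
    (hv : euclNorm v = 1) (hσ₁ : 9 / 20 * s ≤ η * (σ - 10000 * s))
    (hσ₂ : η * (σ - 10000 * s) ≤ 2 * s) (hx : euclNorm x = 1) (hy : euclNorm y = 1)
    (hxy : planted E η s G u v *ᵥ y = σ • x) (hyx : (planted E η s G u v)ᵀ *ᵥ x = σ • y) :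
    3 / 10 ≤ |x ⬝ᵥ u| := by
  have hσ : |σ - 10000 * s| ≤ 2 * s :=
    abs_le.2 (by constructor <;> rcases hη with rfl | rfl <;> linarith)
  have hspike := planted_pair_spike hE hs hη hG hu hv hσ₁ hσ₂ hx hy hxy hyx
  obtain ⟨hsub, -⟩ := planted_pair_near hE hs hη hG hu hv hσ hx hy hxy hyx
  have hvz : |v ⬝ᵥ (x + y)| ≤ 2 := by
    have := abs_dotProduct_le v (x + y)
    rw [hv, one_mul] at this
    linarith [euclNorm_add_le x y]
  have huz : 17 / 20 ≤ |(x + y) ⬝ᵥ u| := by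
    rw [abs_mul] at hspike
    linarith [mul_le_mul_of_nonneg_left hvz (abs_nonneg ((x + y) ⬝ᵥ u))]
  have hud := abs_dotProduct_le (x - y) u
  rw [hu, mul_one] at hud
  have hsplit : (x + y) ⬝ᵥ u = 2 * (x ⬝ᵥ u) - (x - y) ⬝ᵥ u := by
    rw [add_dotProduct, sub_dotProduct]
    ring
  have htri := abs_sub (2 * (x ⬝ᵥ u)) ((x - y) ⬝ᵥ u)
  rw [← hsplit, abs_mul, abs_two] at htri
  linarith

lemma abs_euclNorm_planted_mulVec_sub_le (hs : 0 < s) (hG : specNorm G ≤ s / 1000)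
    (hu : euclNorm u = 1) (hv : euclNorm v = 1) (hp : E *ᵥ p = 0) :
    |euclNorm (planted E η s G u v *ᵥ p) - 10000 * s * euclNorm p| ≤ 2 * s * euclNorm p := by
  have hX := mul_le_mul_of_nonneg_right (specNorm_add_smul_vecMulVec_le hs.le hG hu hv)
    (euclNorm_nonneg p)
  have hXp := euclNorm_mulVec_le (G + s • vecMulVec u v) p
  have hCp : euclNorm ((10000 * s) • p) = 10000 * s * euclNorm p := by
    rw [euclNorm_smul, abs_of_pos (by positivity)]
  have hadd := euclNorm_add_le ((10000 * s) • p) ((G + s • vecMulVec u v) *ᵥ p)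
  have hsub := euclNorm_sub_le ((10000 * s) • p + (G + s • vecMulVec u v) *ᵥ p)
    ((G + s • vecMulVec u v) *ᵥ p)
  rw [add_sub_cancel_right] at hsub
  rw [planted, add_mulVec, plantBase_mulVec, hp, smul_zero, add_zero, abs_le]
  constructor <;> linarith

lemma le_euclNorm_planted_mulVec (hE : IsStarProjection E) (hs : 0 < s)
    (hG : specNorm G ≤ s / 1000) (hEu : E *ᵥ u = 0) (hEv : E *ᵥ v = 0)
    (huvw : (u ⬝ᵥ w) * (v ⬝ᵥ w) = 1 / 2) (hp : (E + vecMulVec w w) *ᵥ p = p) :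
    (10000 * s + 9 / 20 * s) * euclNorm p ≤ euclNorm (planted E 1 s G u v *ᵥ p) := by
  rcases eq_or_ne p 0 with rfl | h₀
  · simp
  refine le_of_mul_le_mul_left ?_ (euclNorm_pos h₀)
  refine le_trans ?_ ((le_abs_self _).trans (abs_dotProduct_le p _))
  have hspike : (p ⬝ᵥ u) * (v ⬝ᵥ p) = (w ⬝ᵥ p) ^ 2 / 2 := by
    rw [dotProduct_comm p u, dotProduct_of_add_vecMulVec_mulVec_eq hE hp hEu,
      dotProduct_of_add_vecMulVec_mulVec_eq hE hp hEv]
    linear_combination (w ⬝ᵥ p) ^ 2 * huvw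
  rw [planted, add_mulVec, dotProduct_add, dotProduct_plantBase_mulVec hE,
    dotProduct_add_smul_vecMulVec_mulVec, hspike]
  have hGp := (abs_le.1 (abs_dotProduct_mulVec_le G p p)).1
  have hGle := mul_le_mul_of_nonneg_right hG (sq_nonneg (euclNorm p))
  have hnorm := congrArg (s * ·) (euclNorm_sq_of_add_vecMulVec_mulVec_eq hE hp)
  have := mul_nonneg hs.le (sq_nonneg (euclNorm (E *ᵥ p)))
  have := mul_nonneg hs.le (sq_nonneg (w ⬝ᵥ p))
  simp only [mul_add] at hnorm
  linarith

lemma planted_neg_one_mulVec (hp : (E + vecMulVec w w) *ᵥ p = p) (s : ℝ) (G : Matrix ι ι ℝ)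
    (u v : ι → ℝ) :
    planted E (-1) s G u v *ᵥ p
      = (10000 * s * (w ⬝ᵥ p)) • w + (G + s • vecMulVec u v) *ᵥ p := by
  have hEp : E *ᵥ p = p - (w ⬝ᵥ p) • w := by
    rw [eq_sub_iff_add_eq]
    simpa only [add_mulVec, vecMulVec_mulVec, op_smul_eq_smul] using hp
  rw [planted, add_mulVec, plantBase_mulVec, hEp]
  module

lemma euclNorm_planted_mulVec_le (hE : IsStarProjection E) (hs : 0 < s)
    (hG : specNorm G ≤ s / 1000) (hu : euclNorm u = 1) (hv : euclNorm v = 1)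
    (hw : euclNorm w = 1) (hEv : E *ᵥ v = 0) (huvw : (u ⬝ᵥ w) * (v ⬝ᵥ w) = -1 / 2)
    (hp : (E + vecMulVec w w) *ᵥ p = p) :
    euclNorm (planted E (-1) s G u v *ᵥ p) ≤ (10000 * s - 9 / 20 * s) * euclNorm p := by
  set β := w ⬝ᵥ p
  set y := (G + s • vecMulVec u v) *ᵥ p with hy
  have hwy : w ⬝ᵥ y = w ⬝ᵥ G *ᵥ p - s * β / 2 := by
    rw [hy, dotProduct_add_smul_vecMulVec_mulVec,
      dotProduct_of_add_vecMulVec_mulVec_eq hE hp hEv, dotProduct_comm w u]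
    linear_combination s * β * huvw
  have hβ : |β| ≤ euclNorm p := by
    simpa only [hw, one_mul] using abs_dotProduct_le w p
  have hβG : β * (w ⬝ᵥ G *ᵥ p) ≤ s / 1000 * euclNorm p ^ 2 := by
    have hwG := abs_dotProduct_mulVec_le G w p
    rw [hw, one_mul] at hwG
    calc β * (w ⬝ᵥ G *ᵥ p) ≤ |β| * |w ⬝ᵥ G *ᵥ p| := by rw [← abs_mul]; exact le_abs_self _
      _ ≤ euclNorm p * (s / 1000 * euclNorm p) :=
        mul_le_mul hβ (hwG.trans (mul_le_mul_of_nonneg_right hG (euclNorm_nonneg p)))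
          (abs_nonneg _) (euclNorm_nonneg p)
      _ = _ := by ring
  have hyle : euclNorm y ^ 2 ≤ (2 * s * euclNorm p) ^ 2 := by
    refine pow_le_pow_left₀ (euclNorm_nonneg _) ((euclNorm_mulVec_le _ p).trans ?_) 2
    exact mul_le_mul_of_nonneg_right (specNorm_add_smul_vecMulVec_le hs.le hG hu hv)
      (euclNorm_nonneg p)
  refine le_of_sq_le_sq ?_ (mul_nonneg (by linarith) (euclNorm_nonneg p))
  rw [planted_neg_one_mulVec hp, euclNorm_smul_add_sq hw, hwy]
  have := mul_le_mul_of_nonneg_left hβG hs.le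
  have := mul_nonneg (sq_nonneg s) (sq_nonneg (euclNorm p))
  have := mul_le_mul_of_nonneg_left (sq_le_sq.2 (hβ.trans (le_abs_self _))) (sq_nonneg s)
  linarith

lemma abs_singVal_planted_sub_le (hE : IsStarProjection E) (hs : 0 < s)
    (hG : specNorm G ≤ s / 1000) (hu : euclNorm u = 1) (hv : euclNorm v = 1)
    (hi : 1 ≤ i) (hiE : E.rank < i) (hiE' : i ≤ Fintype.card ι - E.rank) :
    |singVal (planted E η s G u v) i - 10000 * s| ≤ 2 * s := by
  have hker {p : ι → ℝ} (hp : (1 - E) *ᵥ p = p) : E *ᵥ p = 0 := by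
    rwa [sub_mulVec, one_mulVec, sub_eq_self] at hp
  have hrank := rank_one_sub_of_isStarProjection hE
  have hcard := E.rank_le_card_width
  have hlower : 10000 * s - 2 * s ≤ singVal (planted E η s G u v) i := by
    refine le_singVal_of_isStarProjection hE.one_sub hi (by omega) fun p hp => ?_
    have := abs_le.1 (abs_euclNorm_planted_mulVec_sub_le (η := η) hs hG hu hv (hker hp))
    linarith
  have hupper : singVal (planted E η s G u v) i ≤ 10000 * s + 2 * s := by
    refine singVal_le_of_isStarProjection hE.one_sub (by linarith) (by omega) fun p hp => ?_
    have := abs_le.1 (abs_euclNorm_planted_mulVec_sub_le (η := η) hs hG hu hv (hker hp))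
    linarith
  exact abs_le.2 ⟨by linarith, by linarith⟩

lemma le_mul_singVal_planted_sub (hE : IsStarProjection E) (hs : 0 < s)
    (hG : specNorm G ≤ s / 1000) (hu : euclNorm u = 1) (hv : euclNorm v = 1)
    (huv : u ⬝ᵥ v = 0) (hEu : E *ᵥ u = 0) (hEv : E *ᵥ v = 0)
    (hη : η = 1 ∧ E.rank + 1 = i ∨ η = -1 ∧ E.rank + i = Fintype.card ι) :
    9 / 20 * s ≤ η * (singVal (planted E η s G u v) i - 10000 * s) := by
  obtain ⟨w, hw, hEw, huvw⟩ := exists_bisector (hη.imp And.left And.left) hu hv huv hEu hEv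
  have hP := isStarProjection_add_vecMulVec hE hw hEw
  have hrank := rank_add_vecMulVec hE hw hEw
  rcases hη with ⟨rfl, hi⟩ | ⟨rfl, hi⟩
  · have := le_singVal_of_isStarProjection (i := i) hP (by omega) (by omega) fun p hp =>
      le_euclNorm_planted_mulVec hE hs hG hEu hEv huvw hp
    linarith
  · have := singVal_le_of_isStarProjection (i := i) hP (by linarith) (by omega) fun p hp =>
      euclNorm_planted_mulVec_le hE hs hG hu hv hw hEv huvw hp
    linarith

lemma le_abs_dotProduct_of_singVal_pair (hE : IsStarProjection E) (hs : 0 < s)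
    (hG : specNorm G ≤ s / 1000) (hu : euclNorm u = 1) (hv : euclNorm v = 1)
    (huv : u ⬝ᵥ v = 0) (hEu : E *ᵥ u = 0) (hEv : E *ᵥ v = 0)
    (hrank : 2 * E.rank < Fintype.card ι)
    (hη : η = 1 ∧ E.rank + 1 = i ∨ η = -1 ∧ E.rank + i = Fintype.card ι)
    (hx : euclNorm x = 1) (hy : euclNorm y = 1)
    (hxy : planted E η s G u v *ᵥ y = singVal (planted E η s G u v) i • x)
    (hyx : (planted E η s G u v)ᵀ *ᵥ x = singVal (planted E η s G u v) i • y) :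
    3 / 10 ≤ |x ⬝ᵥ u| := by
  have hσ := abs_le.1 (abs_singVal_planted_sub_le (η := η) hE hs hG hu hv (by omega) (by omega)
    (by omega : i ≤ Fintype.card ι - E.rank))
  refine le_abs_dotProduct_of_planted_pair hE hs (hη.imp And.left And.left) hG hu hv
    (le_mul_singVal_planted_sub hE hs hG hu hv huv hEu hEv hη) ?_ hx hy hxy hyx
  rcases hη with ⟨rfl, -⟩ | ⟨rfl, -⟩ <;> linarith

end Planted

/-! ### The information bound round by round -/

lemma sum_measure_le_of_card_le {Ω S : Type*} [MeasurableSpace Ω] {μ : Measure Ω}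
    [IsProbabilityMeasure μ] [Fintype S] {B : S → Set Ω} {c : ℝ}
    (hB : ∀ p, MeasurableSet (B p)) (hc : ∀ x, ((Finset.univ.filter (x ∈ B ·)).card : ℝ) ≤ c) :
    ∑ p, μ (B p) ≤ ENNReal.ofReal c := by
  calc ∑ p, μ (B p) = ∫⁻ x, ∑ p, (B p).indicator 1 x ∂μ := by
        rw [lintegral_finsetSum _ fun p _ => measurable_one.indicator (hB p)]
        exact Finset.sum_congr rfl fun p _ => (lintegral_indicator_one (hB p)).symm
    _ ≤ ∫⁻ _, ENNReal.ofReal c ∂μ := by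
        refine lintegral_mono fun x => ?_
        have hcard := ENNReal.ofReal_le_ofReal (hc x)
        rw [ENNReal.ofReal_natCast] at hcard
        refine le_of_eq_of_le ?_ hcard
        simp [Set.indicator_apply]
    _ = ENNReal.ofReal c := by simp

namespace QueryMaps

variable {N k t : ℕ} {Q : QueryMaps N k t}

/-- The algorithm stopped after its first `j` rounds. -/
def trunc (Q : QueryMaps N k t) {j : ℕ} (hj : j ≤ t) : QueryMaps N k j :=
  fun l => Q (l.castLE hj)

lemma Valid.trunc (hQ : Q.Valid) {j : ℕ} (hj : j ≤ t) : (Q.trunc hj).Valid := by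
  obtain ⟨hmeas, hortho, hcross⟩ := hQ
  exact ⟨fun l => hmeas (l.castLE hj), fun l => hortho (l.castLE hj),
    fun l i => hcross (l.castLE hj) (i.castLE hj)⟩

lemma resp_trunc (Q : QueryMaps N k t) {j : ℕ} (hj : j ≤ t) (a : Fin N → ℝ) (l : Fin j) :
    (Q.trunc hj).resp a l = Q.resp a (l.castLE hj) := by
  obtain ⟨m, hm⟩ := l
  induction m using Nat.strong_induction_on with
  | _ m ih =>
    rw [resp, resp]
    exact congrArg (Q ⟨m, hm.trans_le hj⟩ · *ᵥ a) (funext fun i => ih i i.isLt _)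

lemma resp_trunc_eq_past (Q : QueryMaps N k t) (a : Fin N → ℝ) (j : Fin t) :
    (Q.trunc j.isLt.le).resp a = past (Q.resp a) j :=
  funext fun l => Q.resp_trunc j.isLt.le a l

lemma past_resp_trunc (Q : QueryMaps N k t) {j : ℕ} (hj : j ≤ t) (a : Fin N → ℝ) (l : Fin j) :
    past ((Q.trunc hj).resp a) l = past (Q.resp a) (l.castLE hj) :=
  funext fun i => Q.resp_trunc hj a ⟨i, i.isLt.trans l.isLt⟩

/-- Transcripts along which the queries of every round `j` see at most `τ j` of the squared mass
of the plant `w`. -/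
def quiet (Q : QueryMaps N k t) (τ : ℕ → ℝ) (w : Fin N → ℝ) : Set (Fin t → Fin k → ℝ) :=
  {x | ∀ j, sqNorm (Q j (past x j) *ᵥ w) ≤ τ j}

/-- Transcripts of the first `j` rounds after which round `j` is the first one whose queries see
more than `τ j` of the squared mass of the plant `w`. -/
def firstLoud (Q : QueryMaps N k t) (τ : ℕ → ℝ) (w : Fin N → ℝ) (j : Fin t) :
    Set (Fin (j : ℕ) → Fin k → ℝ) :=
  (Q.trunc j.isLt.le).quiet τ w ∩ {x | τ j < sqNorm (Q j x *ᵥ w)}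

lemma sqNorm_stack_mulVec_le_of_mem_quiet {τ : ℕ → ℝ} {w : Fin N → ℝ} {x : Fin t → Fin k → ℝ}
    (hx : x ∈ Q.quiet τ w) : sqNorm (Q.stack x *ᵥ w) ≤ ∑ l ∈ Finset.range t, τ l := by
  rw [sqNorm_stack_mulVec, Finset.sum_range]
  exact Finset.sum_le_sum fun l _ => hx l

lemma Valid.measurable_sqNorm_mulVec (hQ : Q.Valid) (j : Fin t) (w : Fin N → ℝ) :
    Measurable fun h => sqNorm (Q j h *ᵥ w) :=
  measurable_sqNorm (measurable_mulVec (hQ.1 j) (measurable_const (a := w)))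

lemma Valid.measurableSet_quiet (hQ : Q.Valid) (τ : ℕ → ℝ) (w : Fin N → ℝ) :
    MeasurableSet (Q.quiet τ w) := by
  simp only [quiet, Set.ofPred_forall]
  exact MeasurableSet.iInter fun j => measurableSet_le
    ((hQ.measurable_sqNorm_mulVec j w).comp (measurable_past j)) measurable_const

lemma Valid.measurableSet_firstLoud (hQ : Q.Valid) (τ : ℕ → ℝ) (w : Fin N → ℝ) (j : Fin t) :
    MeasurableSet (Q.firstLoud τ w j) :=
  ((hQ.trunc j.isLt.le).measurableSet_quiet τ w).inter
    (measurableSet_lt measurable_const (hQ.measurable_sqNorm_mulVec j w))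

lemma resp_mem_quiet_or_exists_mem_firstLoud (Q : QueryMaps N k t) (τ : ℕ → ℝ)
    (w b : Fin N → ℝ) :
    Q.resp b ∈ Q.quiet τ w ∨ ∃ j : Fin t, (Q.trunc j.isLt.le).resp b ∈ Q.firstLoud τ w j := by
  refine or_iff_not_imp_left.2 fun h => ?_
  simp only [quiet, Set.mem_ofPred_eq] at h
  push Not at h
  obtain ⟨j, hj, hmin⟩ := WellFounded.has_min (wellFounded_lt (α := Fin t))
    {j | τ j < sqNorm (Q j (past (Q.resp b) j) *ᵥ w)} h
  refine ⟨j, fun l => ?_, ?_⟩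
  · rw [past_resp_trunc]
    exact not_lt.1 fun hl => hmin (l.castLE j.isLt.le) hl l.isLt
  · rwa [Set.mem_ofPred_eq, resp_trunc_eq_past]

section Average

variable {S : Type*} [Fintype S] {w : S → Fin N → ℝ}

lemma Valid.sum_measure_resp_add_smul_mem_le (hQ : Q.Valid) (a : Fin N → ℝ) (s y : ℝ) {T κ : ℝ}
    {B : S → Set (Fin t → Fin k → ℝ)} (hB : ∀ p, MeasurableSet (B p))
    (hT : ∀ p, ∀ x ∈ B p, sqNorm (Q.stack x *ᵥ w p) ≤ T) (hκ : 0 ≤ κ)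
    (hcard : ∀ x, ((Finset.univ.filter (x ∈ B ·)).card : ℝ) ≤ Fintype.card S * κ) :
    ∑ p, γ (Fin N) {g | Q.resp (a + s • w p + g) ∈ B p}
      ≤ Fintype.card S * ENNReal.ofReal (Real.exp (-y) + Real.exp (s ^ 2 * T + y) * κ) := by
  have hnull : ∑ p, γ (Fin N) {g | Q.resp (a + g) ∈ B p}
      ≤ ENNReal.ofReal (Fintype.card S * κ) :=
    sum_measure_le_of_card_le (fun p => hQ.measurable_resp.comp (measurable_const_add a) (hB p))
      fun g => hcard (Q.resp (a + g))
  calc ∑ p, γ (Fin N) {g | Q.resp (a + s • w p + g) ∈ B p}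
      ≤ ∑ p, (ENNReal.ofReal (Real.exp (-y)) + ENNReal.ofReal (Real.exp (s ^ 2 * T + y))
          * γ (Fin N) {g | Q.resp (a + g) ∈ B p}) :=
        Finset.sum_le_sum fun p _ => hQ.measure_resp_add_smul_mem_le a (w p) s y (hB p) (hT p)
    _ = Fintype.card S * ENNReal.ofReal (Real.exp (-y))
        + ENNReal.ofReal (Real.exp (s ^ 2 * T + y))
          * ∑ p, γ (Fin N) {g | Q.resp (a + g) ∈ B p} := by
        rw [Finset.sum_add_distrib, Finset.mul_sum]
        simp
    _ ≤ Fintype.card S * ENNReal.ofReal (Real.exp (-y))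
        + ENNReal.ofReal (Real.exp (s ^ 2 * T + y)) * ENNReal.ofReal (Fintype.card S * κ) := by
        gcongr
    _ = Fintype.card S * ENNReal.ofReal (Real.exp (-y) + Real.exp (s ^ 2 * T + y) * κ) := by
        rw [ENNReal.ofReal_add (Real.exp_pos _).le (by positivity),
          ENNReal.ofReal_mul (Real.exp_pos _).le, ENNReal.ofReal_mul (by positivity),
          ENNReal.ofReal_natCast]
        ring

variable {τ : ℕ → ℝ} {y ρ : ℝ}

lemma Valid.sum_measure_resp_trunc_mem_firstLoud_le (hQ : Q.Valid) (a : Fin N → ℝ) (s : ℝ)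
    (j : Fin t) {κ : ℝ} (hκ : 0 ≤ κ)
    (hcard : ∀ M : Matrix (Fin k) (Fin N) ℝ, M * Mᵀ = 1 →
      ((Finset.univ.filter fun p => τ j < sqNorm (M *ᵥ w p)).card : ℝ) ≤ Fintype.card S * κ)
    (hρ : Real.exp (-y) + Real.exp (s ^ 2 * (∑ l ∈ Finset.range j, τ l) + y) * κ ≤ ρ) :
    ∑ p, γ (Fin N) {g | (Q.trunc j.isLt.le).resp (a + s • w p + g) ∈ Q.firstLoud τ (w p) j}
      ≤ Fintype.card S * ENNReal.ofReal ρ := by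
  refine ((hQ.trunc j.isLt.le).sum_measure_resp_add_smul_mem_le a s y
    (fun p => hQ.measurableSet_firstLoud τ (w p) j)
    (fun p x hx => sqNorm_stack_mulVec_le_of_mem_quiet hx.1) hκ fun x => ?_).trans (by gcongr)
  refine le_trans ?_ (hcard (Q j x) (hQ.2.1 j x))
  gcongr with p
  exact fun hp => hp.2

lemma Valid.sum_measure_resp_mem_quiet_inter_le (hQ : Q.Valid) (a : Fin N → ℝ) (s : ℝ) {κ : ℝ}
    (hκ : 0 ≤ κ) {B : S → Set (Fin t → Fin k → ℝ)} (hB : ∀ p, MeasurableSet (B p))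
    (hcard : ∀ x, ((Finset.univ.filter (x ∈ B ·)).card : ℝ) ≤ Fintype.card S * κ)
    (hρ : Real.exp (-y) + Real.exp (s ^ 2 * (∑ l ∈ Finset.range t, τ l) + y) * κ ≤ ρ) :
    ∑ p, γ (Fin N) {g | Q.resp (a + s • w p + g) ∈ Q.quiet τ (w p) ∩ B p}
      ≤ Fintype.card S * ENNReal.ofReal ρ := by
  refine (hQ.sum_measure_resp_add_smul_mem_le a s y
    (fun p => (hQ.measurableSet_quiet τ (w p)).inter (hB p))
    (fun p x hx => sqNorm_stack_mulVec_le_of_mem_quiet hx.1) hκ fun x => ?_).trans (by gcongr)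
  refine le_trans ?_ (hcard x)
  gcongr
  exact Set.inter_subset_right

/-- Split according to the first round `j` whose queries see more than `τ j` of the plant; if
there is none, the transcript barely depends on the plant. -/
lemma Valid.sum_measure_resp_mem_le (hQ : Q.Valid) (a : Fin N → ℝ) (s : ℝ) {κ : ℕ → ℝ} {κ' : ℝ}
    (hκ : ∀ j, 0 ≤ κ j) (hκ' : 0 ≤ κ') {B : S → Set (Fin t → Fin k → ℝ)}
    (hB : ∀ p, MeasurableSet (B p))
    (hcard : ∀ M : Matrix (Fin k) (Fin N) ℝ, M * Mᵀ = 1 → ∀ j,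
      ((Finset.univ.filter fun p => τ j < sqNorm (M *ᵥ w p)).card : ℝ) ≤ Fintype.card S * κ j)
    (hcard' : ∀ x, ((Finset.univ.filter (x ∈ B ·)).card : ℝ) ≤ Fintype.card S * κ')
    (hρ : ∀ j < t, Real.exp (-y) + Real.exp (s ^ 2 * (∑ l ∈ Finset.range j, τ l) + y) * κ j ≤ ρ)
    (hρ' : Real.exp (-y) + Real.exp (s ^ 2 * (∑ l ∈ Finset.range t, τ l) + y) * κ' ≤ ρ) :
    ∑ p, γ (Fin N) {g | Q.resp (a + s • w p + g) ∈ B p}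
      ≤ Fintype.card S * ((t + 1) * ENNReal.ofReal ρ) := by
  set loud : Fin t → S → Set (Fin N → ℝ) := fun j p =>
    {g | (Q.trunc j.isLt.le).resp (a + s • w p + g) ∈ Q.firstLoud τ (w p) j}
  set silent : S → Set (Fin N → ℝ) := fun p =>
    {g | Q.resp (a + s • w p + g) ∈ Q.quiet τ (w p) ∩ B p}
  have hcover p : {g | Q.resp (a + s • w p + g) ∈ B p} ⊆ (⋃ j, loud j p) ∪ silent p := by
    intro g hg
    rcases Q.resp_mem_quiet_or_exists_mem_firstLoud τ (w p) (a + s • w p + g) with h | h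
    · exact Or.inr ⟨h, hg⟩
    · exact Or.inl (Set.mem_iUnion.2 h)
  calc ∑ p, γ (Fin N) {g | Q.resp (a + s • w p + g) ∈ B p}
      ≤ ∑ p, ((∑ j, γ (Fin N) (loud j p)) + γ (Fin N) (silent p)) := by
        refine Finset.sum_le_sum fun p _ => (measure_mono (hcover p)).trans ?_
        refine (measure_union_le _ _).trans ?_
        gcongr
        exact measure_iUnion_fintype_le _ _
    _ = (∑ j, ∑ p, γ (Fin N) (loud j p)) + ∑ p, γ (Fin N) (silent p) := by
        rw [Finset.sum_add_distrib, Finset.sum_comm]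
    _ ≤ (∑ _j : Fin t, Fintype.card S * ENNReal.ofReal ρ)
        + Fintype.card S * ENNReal.ofReal ρ := by
        gcongr with j
        · exact hQ.sum_measure_resp_trunc_mem_firstLoud_le a s j (hκ j)
            (fun M hM => hcard M hM j) (hρ j j.isLt)
        · exact hQ.sum_measure_resp_mem_quiet_inter_le a s hκ' hB hcard' hρ'
    _ = Fintype.card S * ((t + 1) * ENNReal.ofReal ρ) := by
        simp only [Finset.sum_const, Finset.card_univ, Fintype.card_fin, nsmul_eq_mul]
        ring

end Average

end QueryMaps

/-! ### Averaging over the planted instances -/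

/-- The unit vectors within `1 / 10` of the left vector of some `i`-th singular vector pair of
`A`. -/
def leftSingularApprox {n : ℕ} (A : Matrix (Fin n) (Fin n) ℝ) (i : ℕ) : Set (Fin n → ℝ) :=
  {x | sqNorm x = 1 ∧ ∃ u v, sqNorm u = 1 ∧ sqNorm v = 1 ∧
    A *ᵥ v = singVal A i • u ∧ Aᵀ *ᵥ u = singVal A i • v ∧ √(sqNorm (x - u)) ≤ 1 / 10}

lemma vec_planted {n : ℕ} (E : Matrix (Fin n) (Fin n) ℝ) (η s : ℝ) (g : Fin (n * n) → ℝ)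
    (u v : Fin n → ℝ) :
    _root_.vec n (planted E η s (unvec g) u v)
      = _root_.vec n (plantBase E η s) + s • tensor u v + g := by
  conv_rhs => rw [← vec_unvec g]
  funext p
  simp only [_root_.vec, tensor, planted, Matrix.add_apply, Matrix.smul_apply, vecMulVec_apply,
    Pi.add_apply, Pi.smul_apply, smul_eq_mul, Matrix.of_apply]
  ring

/-- The data of a family of planted matrices on which the `i`-th singular vectors reveal the
spike: the parameters `E` and `η` of `plantBase`, and disjoint coordinate blocks `J₁` and `J₂`,
annihilated by `E`, which support the left and the right vector of the spike. -/
structure HardInstance (n i : ℕ) where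
  E : Matrix (Fin n) (Fin n) ℝ
  η : ℝ
  J₁ : Finset (Fin n)
  J₂ : Finset (Fin n)
  isStarProjection : IsStarProjection E
  mulVec_eq_zero : ∀ x, (∀ a, a ∉ J₁ ∪ J₂ → x a = 0) → E *ᵥ x = 0
  two_mul_rank_lt : 2 * E.rank < n
  corner : η = 1 ∧ E.rank + 1 = i ∨ η = -1 ∧ E.rank + i = n
  disjoint : Disjoint J₁ J₂
  card₁ : J₁.card = n / 4
  card₂ : J₂.card = n / 4

lemma isStarProjection_diagonal_indicator {ι : Type*} [Fintype ι] [DecidableEq ι]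
    (J : Finset ι) :
    IsStarProjection (diagonal fun a => if a ∈ J then (0 : ℝ) else 1) where
  isIdempotentElem := by
    rw [IsIdempotentElem, diagonal_mul_diagonal]
    congr 1
    funext a
    split_ifs <;> norm_num
  isSelfAdjoint := by
    rw [IsSelfAdjoint, star_eq_conjTranspose, diagonal_conjTranspose]
    rfl

lemma rank_diagonal_indicator {ι : Type*} [Fintype ι] [DecidableEq ι] (J : Finset ι) :
    (diagonal fun a => if a ∈ J then (0 : ℝ) else 1).rank = Fintype.card ι - J.card := by
  rw [rank_diagonal, ← Finset.card_compl, ← Fintype.card_coe]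
  refine Fintype.card_congr (Equiv.subtypeEquivRight fun a => ?_)
  by_cases ha : a ∈ J <;> simp [ha]

lemma exists_disjoint_subsets_card_eq {α : Type*} [DecidableEq α] {J : Finset α} {q : ℕ}
    (hq : 2 * q ≤ J.card) :
    ∃ J₁ J₂, J₁ ∪ J₂ ⊆ J ∧ Disjoint J₁ J₂ ∧ J₁.card = q ∧ J₂.card = q := by
  obtain ⟨J₁, h₁, hcard₁⟩ := Finset.exists_subset_card_eq (show q ≤ J.card by omega)
  obtain ⟨J₂, h₂, hcard₂⟩ := Finset.exists_subset_card_eq (s := J \ J₁) (n := q)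
    (by rw [Finset.card_sdiff_of_subset h₁]; omega)
  exact ⟨J₁, J₂, Finset.union_subset h₁ (h₂.trans Finset.sdiff_subset),
    Finset.disjoint_sdiff.mono_right h₂, hcard₁, hcard₂⟩

namespace HardInstance

variable {n i : ℕ}

lemma nonempty (hi : 1 ≤ i) (hin : i ≤ n) : Nonempty (HardInstance n i) := by
  have construct (η : ℝ) (m : ℕ) (hm : m ≤ n) (hnm : n < 2 * m)
      (hη : η = 1 ∧ n - m + 1 = i ∨ η = -1 ∧ n - m + i = n) : Nonempty (HardInstance n i) := by
    obtain ⟨J, -, hJ⟩ := Finset.exists_subset_card_eq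
      (s := (Finset.univ : Finset (Fin n))) (n := m) (by simpa using hm)
    obtain ⟨J₁, J₂, hsub, hdisj, h₁, h₂⟩ := exists_disjoint_subsets_card_eq
      (show 2 * (n / 4) ≤ J.card by omega)
    have hrank := rank_diagonal_indicator J
    rw [Fintype.card_fin, hJ] at hrank
    refine ⟨⟨_, η, J₁, J₂, isStarProjection_diagonal_indicator J, fun x hx => ?_, by omega,
      by rwa [hrank], hdisj, h₁, h₂⟩⟩
    funext a
    rw [mulVec_diagonal]
    by_cases ha : a ∈ J
    · simp [ha]
    · simp [hx a fun h => ha (hsub h)]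
  rcases le_or_gt (2 * i) n with h | h
  · exact construct 1 (n - i + 1) (by omega) (by omega) (.inl ⟨rfl, by omega⟩)
  · exact construct (-1) i hin h (.inr ⟨rfl, by omega⟩)

variable (H : HardInstance n i)

/-- The index set of the spikes of the family: the signs of their coordinates. -/
abbrev Signs : Type := (H.J₁ → Bool) × (H.J₂ → Bool)

/-- The left vector of the spike with signs `p`. -/
def left (p : H.Signs) : Fin n → ℝ := unitSign H.J₁ p.1

/-- The right vector of the spike with signs `p`. -/
def right (p : H.Signs) : Fin n → ℝ := unitSign H.J₂ p.2

lemma card_signs : (Fintype.card H.Signs : ℝ) = 2 ^ (n / 4) * 2 ^ (n / 4) := by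
  simp [H.card₁, H.card₂]

lemma card_lt_sqNorm_mulVec_tensor_le {κ : Type*} [Fintype κ] [DecidableEq κ] (hn : 4 ≤ n)
    {M : Matrix κ (Fin (n * n)) ℝ} (hM : M * Mᵀ = 1) (τ : ℝ) :
    ((Finset.univ.filter fun p => τ < sqNorm (M *ᵥ tensor (H.left p) (H.right p))).card : ℝ)
      ≤ Fintype.card H.Signs *
        Real.exp (-((n / 4 : ℕ) * τ / 8) + Fintype.card κ / (2 * (n / 4 : ℕ))) := by
  rw [H.card_signs]
  exact card_lt_sqNorm_mulVec_tensor_unitSign_le hM (by omega) H.card₁ H.card₂ τ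

lemma card_le_abs_dotProduct_left_le (hn : 4 ≤ n) {x : Fin n → ℝ} (hx : sqNorm x ≤ 1)
    {θ : ℝ} (hθ : 0 ≤ θ) :
    ((Finset.univ.filter fun p => θ ≤ |x ⬝ᵥ H.left p|).card : ℝ)
      ≤ Fintype.card H.Signs * (2 * Real.exp (-((n / 4 : ℕ) * θ ^ 2 / 2))) := by
  have hJ : H.J₁.Nonempty := Finset.card_pos.1 (by rw [H.card₁]; omega)
  have hcard := card_le_abs_dotProduct_unitSign_le hJ hx hθ
  have hprod : (Finset.univ.filter fun p => θ ≤ |x ⬝ᵥ H.left p|)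
      = (Finset.univ.filter fun ε => θ ≤ |x ⬝ᵥ unitSign H.J₁ ε|) ×ˢ Finset.univ := by
    refine Finset.ext fun p => (Finset.mem_filter_univ p).trans ?_
    simp [left]
  rw [hprod, Finset.card_product, Nat.cast_mul, H.card_signs]
  rw [H.card₁] at hcard
  calc _ ≤ 2 ^ (n / 4) * (2 * Real.exp (-((n / 4 : ℕ) * θ ^ 2 / 2))) * 2 ^ (n / 4) := by
        gcongr
        simp [H.card₂]
    _ = _ := by ring

lemma le_abs_dotProduct_left_of_mem_leftSingularApprox (hn : 16 ≤ n) {s : ℝ} (hs : 0 < s)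
    {g : Fin (n * n) → ℝ} (hg : g ∈ gridBounded n (s / 4000)) (p : H.Signs) {x : Fin n → ℝ}
    (hx : x ∈ leftSingularApprox (planted H.E H.η s (unvec g) (H.left p) (H.right p)) i) :
    1 / 5 ≤ |x ⬝ᵥ H.left p| := by
  obtain ⟨-, u, v, hu, hv, huv, hvu, hxu⟩ := hx
  have hJ₁ : H.J₁.Nonempty := Finset.card_pos.1 (by rw [H.card₁]; omega)
  have hJ₂ : H.J₂.Nonempty := Finset.card_pos.1 (by rw [H.card₂]; omega)
  have hleft : euclNorm (H.left p) = 1 := euclNorm_eq_one.2 (sqNorm_unitSign hJ₁ p.1)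
  have hright : euclNorm (H.right p) = 1 := euclNorm_eq_one.2 (sqNorm_unitSign hJ₂ p.2)
  have hspec : specNorm (unvec g) ≤ s / 1000 :=
    (specNorm_unvec_le_of_mem_gridBounded hn (by positivity) hg).trans_eq (by ring)
  have hcorr : 3 / 10 ≤ |u ⬝ᵥ H.left p| := by
    refine le_abs_dotProduct_of_singVal_pair H.isStarProjection hs hspec hleft hright
      (unitSign_dotProduct_unitSign H.disjoint p.1 p.2) (H.mulVec_eq_zero _ fun a ha => ?_)
      (H.mulVec_eq_zero _ fun a ha => ?_) (by simpa using H.two_mul_rank_lt)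
      (by simpa using H.corner) (euclNorm_eq_one.2 hu) (euclNorm_eq_one.2 hv) huv hvu
    · exact unitSign_of_notMem p.1 fun h => ha (Finset.mem_union_left _ h)
    · exact unitSign_of_notMem p.2 fun h => ha (Finset.mem_union_right _ h)
  have hclose : |(x - u) ⬝ᵥ H.left p| ≤ 1 / 10 := by
    simpa only [hleft, mul_one] using (abs_dotProduct_le (x - u) (H.left p)).trans
      (mul_le_mul_of_nonneg_right hxu (euclNorm_nonneg _))
  have := abs_sub_abs_le_abs_sub (u ⬝ᵥ H.left p) (x ⬝ᵥ H.left p)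
  rw [abs_sub_comm (u ⬝ᵥ _), ← sub_dotProduct] at this
  linarith

end HardInstance

lemma mul_measure_le_of_sum_measure_prodMk_le {S Ω X : Type*} [Fintype S] [Nonempty S]
    [MeasurableSpace Ω] [MeasurableSpace X] (μ : Measure Ω) [IsProbabilityMeasure μ]
    (ν : Measure X) [SFinite ν] {A : S → Set (Ω × X)} (hA : ∀ p, MeasurableSet (A p))
    {b c : ℝ≥0∞} (hupper : ∀ ω, ∑ p, ν (Prod.mk ω ⁻¹' A p) ≤ Fintype.card S * b)
    {G : Set X} (hG : MeasurableSet G)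
    (hlower : ∀ p, ∀ x ∈ G, c ≤ μ ((fun ω => (ω, x)) ⁻¹' A p)) :
    c * ν G ≤ b := by
  have hprod (p : S) : c * ν G ≤ ∫⁻ ω, ν (Prod.mk ω ⁻¹' A p) ∂μ := by
    calc c * ν G = ∫⁻ _ in G, c ∂ν := (setLIntegral_const _ _).symm
      _ ≤ ∫⁻ x in G, μ ((fun ω => (ω, x)) ⁻¹' A p) ∂ν := setLIntegral_mono' hG (hlower p)
      _ ≤ ∫⁻ x, μ ((fun ω => (ω, x)) ⁻¹' A p) ∂ν := setLIntegral_le_lintegral _ _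
      _ = ∫⁻ ω, ν (Prod.mk ω ⁻¹' A p) ∂μ := by
        rw [← Measure.prod_apply (hA p), Measure.prod_apply_symm (hA p)]
  have hsum : (Fintype.card S : ℝ≥0∞) * (c * ν G) ≤ Fintype.card S * b := by
    calc (Fintype.card S : ℝ≥0∞) * (c * ν G) = ∑ _p : S, c * ν G := by simp
      _ ≤ ∑ p, ∫⁻ ω, ν (Prod.mk ω ⁻¹' A p) ∂μ := Finset.sum_le_sum fun p _ => hprod p
      _ = ∫⁻ ω, ∑ p, ν (Prod.mk ω ⁻¹' A p) ∂μ :=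
        (lintegral_finsetSum _ fun p _ => measurable_measure_prodMk_left (hA p)).symm
      _ ≤ ∫⁻ _, Fintype.card S * b ∂μ := lintegral_mono hupper
      _ = Fintype.card S * b := by simp
  refine (ENNReal.mul_le_mul_iff_right ?_ (ENNReal.natCast_ne_top _)).1 hsum
  exact_mod_cast Fintype.card_ne_zero

namespace HardInstance

variable {n i k t : ℕ} {τ : ℕ → ℝ} {s y ρ : ℝ}

lemma sum_measure_correlated_le (H : HardInstance n i) (hn : 4 ≤ n)
    {Q : QueryMaps (n * n) k t} (hQ : Q.Valid) {o : (Fin t → Fin k → ℝ) → Fin n → ℝ}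
    (ho : Measurable o) (a : Fin (n * n) → ℝ)
    (hρ : ∀ j < t, Real.exp (-y) + Real.exp (s ^ 2 * (∑ l ∈ Finset.range j, τ l) + y) *
      Real.exp (-((n / 4 : ℕ) * τ j / 8) + k / (2 * (n / 4 : ℕ))) ≤ ρ)
    (hρ' : Real.exp (-y) + Real.exp (s ^ 2 * (∑ l ∈ Finset.range t, τ l) + y) *
      (2 * Real.exp (-((n / 4 : ℕ) * (1 / 5) ^ 2 / 2))) ≤ ρ) :
    ∑ p, γ (Fin (n * n)) {g | Q.resp (a + s • tensor (H.left p) (H.right p) + g)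
        ∈ {x | sqNorm (o x) = 1 ∧ 1 / 5 ≤ |o x ⬝ᵥ H.left p|}}
      ≤ Fintype.card H.Signs * ((t + 1) * ENNReal.ofReal ρ) := by
  refine hQ.sum_measure_resp_mem_le a s (fun j => (Real.exp_pos _).le) (by positivity)
    (fun p => ?_) (fun M hM j => ?_) (fun x => ?_) hρ hρ'
  · exact (measurableSet_eq_fun (measurable_sqNorm ho) measurable_const).inter
      (measurableSet_le measurable_const
        (by fun_prop : Measurable fun x => |o x ⬝ᵥ H.left p|))
  · simpa using H.card_lt_sqNorm_mulVec_tensor_le hn hM (τ j)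
  · by_cases hx : sqNorm (o x) = 1
    · refine le_trans ?_ (H.card_le_abs_dotProduct_left_le hn hx.le (by norm_num))
      gcongr with p
      exact fun hp => hp.2
    · have hempty (p : H.Signs) : x ∉ {x | sqNorm (o x) = 1 ∧ 1 / 5 ≤ |o x ⬝ᵥ H.left p|} :=
        fun h => hx h.1
      simp only [hempty, Finset.filter_false, Finset.card_empty, Nat.cast_zero]
      positivity

/-- Yao's principle: the algorithm does as well against a random spike and Gaussian noise, where
for every seed the transcript bound limits its success. -/
lemma mul_measure_gridBounded_le (H : HardInstance n i) (hn : 16 ≤ n) (hs : 0 < s)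
    {Ω : Type*} [MeasurableSpace Ω] {μ : Measure Ω} [IsProbabilityMeasure μ]
    {Qf : Ω → QueryMaps (n * n) k t} {out : Ω → (Fin t → Fin k → ℝ) → Fin n → ℝ}
    (hQ : ∀ ω, (Qf ω).Valid)
    (hQf : ∀ (j : Fin t) (r : Fin k) (l : Fin (n * n)),
      Measurable fun p : Ω × (Fin (j : ℕ) → Fin k → ℝ) => Qf p.1 j p.2 r l)
    (hout : Measurable fun p : Ω × (Fin t → Fin k → ℝ) => out p.1 p.2) {c : ℝ≥0∞}
    (hsucc : ∀ A, c ≤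
      μ {ω | out ω ((Qf ω).resp (_root_.vec n A)) ∈ leftSingularApprox A i})
    (hρ : ∀ j < t, Real.exp (-y) + Real.exp (s ^ 2 * (∑ l ∈ Finset.range j, τ l) + y) *
      Real.exp (-((n / 4 : ℕ) * τ j / 8) + k / (2 * (n / 4 : ℕ))) ≤ ρ)
    (hρ' : Real.exp (-y) + Real.exp (s ^ 2 * (∑ l ∈ Finset.range t, τ l) + y) *
      (2 * Real.exp (-((n / 4 : ℕ) * (1 / 5) ^ 2 / 2))) ≤ ρ) :
    c * γ (Fin (n * n)) (gridBounded n (s / 4000)) ≤ (t + 1) * ENNReal.ofReal ρ := by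
  set a := _root_.vec n (plantBase H.E H.η s)
  let f (p : H.Signs) (z : Ω × (Fin (n * n) → ℝ)) : Fin n → ℝ :=
    out z.1 ((Qf z.1).resp (a + s • tensor (H.left p) (H.right p) + z.2))
  have hf (p : H.Signs) : Measurable (f p) :=
    hout.comp (measurable_fst.prodMk ((QueryMaps.measurable_resp_prod hQf).comp
      (measurable_fst.prodMk (measurable_snd.const_add _))))
  refine mul_measure_le_of_sum_measure_prodMk_le μ (γ (Fin (n * n)))
    (A := fun p => {z | sqNorm (f p z) = 1 ∧ 1 / 5 ≤ |f p z ⬝ᵥ H.left p|}) (fun p => ?_)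
    (fun ω => H.sum_measure_correlated_le (by omega) (hQ ω)
      (hout.comp measurable_prodMk_left) a hρ hρ')
    (measurableSet_gridBounded n (s / 4000)) fun p g hg => ?_
  · have hcorr : Measurable fun z => |f p z ⬝ᵥ H.left p| := by
      have := hf p
      fun_prop
    exact (measurableSet_eq_fun (measurable_sqNorm (hf p)) measurable_const).inter
      (measurableSet_le measurable_const hcorr)
  · refine (hsucc (planted H.E H.η s (unvec g) (H.left p) (H.right p))).trans
      (measure_mono fun ω hω => ?_)
    have hcorr := H.le_abs_dotProduct_left_of_mem_leftSingularApprox hn hs hg p hω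
    have hunit := hω.1
    rw [vec_planted] at hunit hcorr
    exact ⟨hunit, hcorr⟩

end HardInstance

/-! ### Choice of the parameters -/

lemma exists_forall_ge_log_bounds : ∃ n₀ : ℕ, ∀ n : ℕ, n₀ ≤ n →
    16 ≤ n ∧ 10 ^ 10 ≤ Real.log n ∧ 1000 * (2 * Real.log n + 1) ≤ n := by
  have hlog : ∀ᶠ n : ℕ in Filter.atTop, (10 : ℝ) ^ 10 ≤ Real.log n :=
    (Real.tendsto_log_atTop.comp tendsto_natCast_atTop_atTop).eventually_ge_atTop _
  have hsmall : ∀ᶠ n : ℕ in Filter.atTop, ‖Real.log n‖ ≤ 1 / 4000 * ‖(n : ℝ)‖ :=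
    tendsto_natCast_atTop_atTop.eventually
      (Real.isLittleO_log_id_atTop.bound (by norm_num : (0 : ℝ) < 1 / 4000))
  obtain ⟨n₀, h⟩ := Filter.eventually_atTop.1
    ((Filter.eventually_ge_atTop 2000).and (hlog.and hsmall))
  refine ⟨n₀, fun n hn => ?_⟩
  obtain ⟨hn₂₀₀₀, hlog, hsmall⟩ := h n hn
  have hle := (le_abs_self _).trans hsmall
  have : (2000 : ℝ) ≤ n := by exact_mod_cast hn₂₀₀₀
  rw [Real.norm_natCast] at hle
  exact ⟨by omega, hlog, by linarith⟩

lemma two_mul_add_one_pow_le_exp {n : ℕ} (hn : 3 ≤ n) :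
    (2 * (n : ℝ) + 1) ^ (2 * n) ≤ Real.exp (4 * n * Real.log n) := by
  have hn' : (3 : ℝ) ≤ n := by exact_mod_cast hn
  calc (2 * (n : ℝ) + 1) ^ (2 * n) ≤ ((n : ℝ) ^ 2) ^ (2 * n) := by
        gcongr
        nlinarith
    _ = Real.exp (Real.log n) ^ (2 * (2 * n)) := by
        rw [Real.exp_log (by linarith), ← pow_mul]
    _ = Real.exp (4 * n * Real.log n) := by
        rw [← Real.exp_nat_mul]
        push_cast
        ring_nf

/-- The union bound over `exp (O(n log n))` pairs of grid points is beaten by the tail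
`exp (-Ω(n (log n)²))`. -/
lemma nine_tenths_le_stdGaussian_gridBounded {n : ℕ} (hL : 10 ^ 10 ≤ Real.log n) :
    9 / 10 ≤ γ (Fin (n * n)) (gridBounded n (√n * Real.log n / 4000)) := by
  have hn' : (3 : ℝ) ≤ n := by
    have := Real.log_le_self n.cast_nonneg
    linarith
  have hn : 3 ≤ n := by exact_mod_cast hn'
  have hθ : (√n * Real.log n / 4000) ^ 2 = n * Real.log n ^ 2 / 16000000 := by
    rw [div_pow, mul_pow, Real.sq_sqrt (by positivity)]
    norm_num
  have htail : (2 * (n : ℝ) + 1) ^ (2 * n) * Real.exp (-((√n * Real.log n / 4000) ^ 2 / 32))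
      ≤ 1 / 10 := by
    calc _ ≤ Real.exp (4 * n * Real.log n)
          * Real.exp (-((√n * Real.log n / 4000) ^ 2 / 32)) := by
          gcongr
          exact two_mul_add_one_pow_le_exp hn
      _ = Real.exp (4 * n * Real.log n - n * Real.log n ^ 2 / 16000000 / 32) := by
          rw [← Real.exp_add, hθ, sub_eq_add_neg]
      _ ≤ Real.exp (-9) := by
          have : 3 * 10 ^ 10 ≤ n * Real.log n := by gcongr
          refine Real.exp_le_exp.2 ?_
          nlinarith
      _ ≤ 1 / 10 := by
          rw [Real.exp_neg, ← one_div]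
          have := Real.add_one_le_exp 9
          exact one_div_le_one_div_of_le (by norm_num) (by linarith)
  have hcompl := (stdGaussian_compl_gridBounded_le n (by positivity)).trans
    (ENNReal.ofReal_le_ofReal htail)
  rw [prob_compl_eq_one_sub (measurableSet_gridBounded _ _), tsub_le_iff_tsub_le] at hcompl
  refine le_trans (le_of_eq ?_) hcompl
  rw [← ENNReal.ofReal_one, ← ENNReal.ofReal_sub _ (by norm_num),
    show (1 : ℝ) - 1 / 10 = 9 / 10 by norm_num, ENNReal.ofReal_div_of_pos (by norm_num)]
  norm_num

/-- How much of the squared norm of the plant round `j` may see. With `s = √N log N`, the total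
seen before round `j` amounts to a likelihood exponent `5 (k / N) log N (M ^ j - 1)`, where
`M = 1 + 80 (log N) ^ 2`, while seeing more than `budget N k j` in round `j` has probability at
most about `exp (-10 (k / N) log N M ^ j)`. -/
def budget (N k : ℝ) (j : ℕ) : ℝ :=
  400 * (k / N) * Real.log N / N * (1 + 80 * Real.log N ^ 2) ^ j

section Budget

variable {N k q : ℝ}

lemma sq_mul_sum_budget (hN : 0 < N) (k : ℝ) (j : ℕ) :
    (√N * Real.log N) ^ 2 * ∑ l ∈ Finset.range j, budget N k l
      = 5 * (k / N) * Real.log N * ((1 + 80 * Real.log N ^ 2) ^ j - 1) := by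
  have hgeom := geom_sum_mul (1 + 80 * Real.log N ^ 2) j
  rw [add_sub_cancel_left] at hgeom
  simp only [budget]
  rw [← Finset.mul_sum, ← hgeom, mul_pow, Real.sq_sqrt hN.le]
  field_simp
  ring

lemma failure_of_round_le (hL : 10 ^ 10 ≤ Real.log N) (hN : 0 < N) (hNk : N ≤ k) (hq : N / 5 ≤ q)
    (j : ℕ) :
    Real.exp (-Real.log N)
      + Real.exp ((√N * Real.log N) ^ 2 * (∑ l ∈ Finset.range j, budget N k l) + Real.log N)
        * Real.exp (-(q * budget N k j / 8) + k / (2 * q)) ≤ 2 * Real.exp (-Real.log N) := by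
  rw [sq_mul_sum_budget hN, ← Real.exp_add, two_mul (Real.exp (-Real.log N))]
  gcongr
  set L := Real.log N
  set κ := k / N
  have hκ₁ : 1 ≤ κ := (one_le_div hN).2 hNk
  have hM : 1 ≤ (1 + 80 * L ^ 2) ^ j := one_le_pow₀ (by nlinarith)
  have hgain : 10 * κ * L * (1 + 80 * L ^ 2) ^ j ≤ q * budget N k j / 8 := by
    have : 0 ≤ budget N k j := by
      have : 0 ≤ L := by linarith
      change 0 ≤ 400 * κ * L / N * _
      positivity
    calc 10 * κ * L * (1 + 80 * L ^ 2) ^ j = N / 5 * budget N k j / 8 := by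
          change _ = N / 5 * (400 * κ * L / N * _) / 8
          field_simp
          ring
      _ ≤ _ := by gcongr
  have hdim : k / (2 * q) ≤ 5 / 2 * κ := by
    have hk : k = κ * N := (div_mul_cancel₀ k hN.ne').symm
    rw [hk, div_le_iff₀ (by linarith)]
    nlinarith
  have hκL : 5 * κ * L * 1 ≤ 5 * κ * L * (1 + 80 * L ^ 2) ^ j := by gcongr
  have : 1 * L ≤ κ * L := by gcongr
  have : κ * 10 ^ 10 ≤ κ * L := by gcongr
  linarith

lemma failure_of_output_le (hN : 0 < N) (hNL : 1000 * (2 * Real.log N + 1) ≤ N) (hq : N / 5 ≤ q)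
    {t : ℕ} (ht : 5 * (k / N) * Real.log N * ((1 + 80 * Real.log N ^ 2) ^ t - 1) ≤ N / 1000) :
    Real.exp (-Real.log N)
      + Real.exp ((√N * Real.log N) ^ 2 * (∑ l ∈ Finset.range t, budget N k l) + Real.log N)
        * (2 * Real.exp (-(q * (1 / 5) ^ 2 / 2))) ≤ 2 * Real.exp (-Real.log N) := by
  rw [sq_mul_sum_budget hN, two_mul (Real.exp (-Real.log N))]
  gcongr
  have htwo : (2 : ℝ) ≤ Real.exp 1 := by
    have := Real.add_one_le_exp 1
    linarith
  refine (mul_le_mul_of_nonneg_left (mul_le_mul_of_nonneg_right htwo (Real.exp_pos _).le)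
    (Real.exp_pos _).le).trans ?_
  rw [← Real.exp_add, ← Real.exp_add]
  gcongr
  linarith

lemma sq_div_le_pow_of_lt_budget (hL : 10 ^ 10 ≤ Real.log N) (hN : 0 < N) (hk : 0 < k) {t : ℕ}
    (ht : N / 1000 < 5 * (k / N) * Real.log N * ((1 + 80 * Real.log N ^ 2) ^ t - 1)) :
    N ^ 2 / k ≤ Real.log N ^ (5 * t) := by
  set L := Real.log N
  have ht₀ : t ≠ 0 := by
    rintro rfl
    rw [pow_zero, sub_self, mul_zero] at ht
    linarith
  have hlinear : 5000 * L ≤ (L ^ 2) ^ t := by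
    calc 5000 * L ≤ L ^ 2 := by nlinarith
      _ ≤ (L ^ 2) ^ t := le_self_pow₀ (one_le_pow₀ (by linarith)) ht₀
  have hcubic : 1 + 80 * L ^ 2 ≤ L ^ 3 := by nlinarith [sq_nonneg L]
  calc N ^ 2 / k ≤ 5000 * L * (1 + 80 * L ^ 2) ^ t := by
        have hle : N / 1000 ≤ 5 * k * L * (1 + 80 * L ^ 2) ^ t / N := by
          calc N / 1000 ≤ 5 * (k / N) * L * (1 + 80 * L ^ 2) ^ t := by
                refine ht.le.trans ?_
                gcongr
                linarith
            _ = _ := by ring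
        rw [le_div_iff₀ hN] at hle
        rw [div_le_iff₀ hk]
        linarith
    _ ≤ (L ^ 2) ^ t * (L ^ 3) ^ t := by gcongr
    _ = L ^ (5 * t) := by rw [← mul_pow, ← pow_add, ← pow_mul]

lemma log_sq_div_div_log_log_le (hL : 10 ^ 10 ≤ Real.log N) (hN : 0 < N) (hNk : N ≤ k) {t : ℕ}
    (ht : t < Real.log N →
      N / 1000 < 5 * (k / N) * Real.log N * ((1 + 80 * Real.log N ^ 2) ^ t - 1)) :
    1 / 5 * (Real.log (N ^ 2 / k) / Real.log (Real.log N)) ≤ t := by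
  have hk : 0 < k := hN.trans_le hNk
  have hLL : 1 ≤ Real.log (Real.log N) := by
    rw [Real.le_log_iff_exp_le (by linarith)]
    have := Real.exp_one_lt_d9
    linarith
  suffices Real.log (N ^ 2 / k) ≤ 5 * t * Real.log (Real.log N) by
    rw [← div_le_iff₀ (by linarith)] at this
    linarith
  rcases le_or_gt (Real.log N) t with htL | htL
  · calc Real.log (N ^ 2 / k) ≤ Real.log N := by
          refine Real.log_le_log (by positivity) ?_
          rw [div_le_iff₀ hk]
          nlinarith
      _ ≤ 5 * t * Real.log (Real.log N) := by nlinarith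
  · refine (Real.log_le_log (by positivity)
      (sq_div_le_pow_of_lt_budget hL hN hk (ht htL))).trans_eq ?_
    rw [Real.log_pow]
    push_cast
    rfl

end Budget

lemma le_mul_of_nine_tenths_mul_le {P : ℝ≥0∞} {t : ℕ} {ρ : ℝ} (hρ : 0 ≤ ρ) (hP : 9 / 10 ≤ P)
    (h : 9 / 10 * P ≤ (t + 1) * ENNReal.ofReal ρ) : 81 / 100 ≤ (t + 1) * ρ := by
  have hle : 9 / 10 * (9 / 10) ≤ (t + 1) * ENNReal.ofReal ρ := le_trans (by gcongr) h
  have hne : ((t : ℝ≥0∞) + 1) * ENNReal.ofReal ρ ≠ ⊤ :=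
    ENNReal.mul_ne_top (by finiteness) ENNReal.ofReal_ne_top
  have := ENNReal.toReal_mono hne hle
  rw [ENNReal.toReal_mul, ENNReal.toReal_mul, ENNReal.toReal_ofReal hρ,
    ENNReal.toReal_add (by finiteness) (by finiteness)] at this
  norm_num at this
  linarith

theorem singular_vector_round_lower_bound_general :
    ∃ (c : ℝ) (n₀ : ℕ), 0 < c ∧
      ∀ (n i k t : ℕ), n₀ ≤ n → 1 ≤ i → i ≤ n → n ≤ k →
      ∀ (Ω : Type*) [MeasurableSpace Ω] (μ : Measure Ω) [IsProbabilityMeasure μ]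
        (Qf : Ω → QueryMaps (n * n) k t) (out : Ω → (Fin t → Fin k → ℝ) → Fin n → ℝ),
        (∀ ω, (Qf ω).Valid) →
        (∀ (j : Fin t) (i' : Fin k) (l : Fin (n * n)),
            Measurable fun p : Ω × (Fin (j : ℕ) → Fin k → ℝ) => Qf p.1 j p.2 i' l) →
        (Measurable fun p : Ω × (Fin t → Fin k → ℝ) => out p.1 p.2) →
        (∀ A, 9 / 10 ≤
          μ {ω | out ω ((Qf ω).resp (_root_.vec n A)) ∈ leftSingularApprox A i}) →
        c * (Real.log ((n : ℝ) ^ 2 / k) / Real.log (Real.log n)) ≤ (t : ℝ) := by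
  obtain ⟨n₀, hn₀⟩ := exists_forall_ge_log_bounds
  refine ⟨1 / 5, n₀, by norm_num,
    fun n i k t hn hi hin hnk Ω _ μ _ Qf out hQ hQf hout hsucc => ?_⟩
  obtain ⟨h16, hL, hNL⟩ := hn₀ n hn
  have hn₁ : (0 : ℝ) < n := by positivity
  have hnk' : (n : ℝ) ≤ k := by exact_mod_cast hnk
  have hq : (n : ℝ) / 5 ≤ ((n / 4 : ℕ) : ℝ) := by
    rw [div_le_iff₀ (by norm_num)]
    exact_mod_cast show n ≤ n / 4 * 5 by omega
  refine log_sq_div_div_log_log_le hL hn₁ hnk' fun htL => not_le.1 fun ht => ?_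
  obtain ⟨H⟩ := HardInstance.nonempty hi hin
  have hgood := H.mul_measure_gridBounded_le h16 (s := √n * Real.log n) (by positivity)
    hQ hQf hout hsucc (fun j _ => failure_of_round_le hL hn₁ hnk' hq j)
    (failure_of_output_le hn₁ hNL hq ht)
  have hsmall := le_mul_of_nine_tenths_mul_le (by positivity)
    (nine_tenths_le_stdGaussian_gridBounded hL) hgood
  rw [Real.exp_neg, Real.exp_log hn₁, ← div_eq_mul_inv, mul_div_assoc', le_div_iff₀ hn₁] at hsmall
  linarith

/-- Round lower bound for approximating the `i`-th left and right singular vectors. -/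
theorem singular_vector_round_lower_bound :
    ∃ (c : ℝ) (n₀ : ℕ), 0 < c ∧
      ∀ (n i k t : ℕ), n₀ ≤ n → 1 ≤ i → i ≤ n → n ≤ k → k ≤ n ^ 2 →
      ∀ (Ω : Type) [MeasurableSpace Ω] (μ : Measure Ω) [IsProbabilityMeasure μ]
        (Qf : Ω → QueryMaps (n * n) k t)
        (out : Ω → (Fin t → Fin k → ℝ) → (Fin n → ℝ) × (Fin n → ℝ)),
        (∀ ω, (Qf ω).Valid) →
        (∀ (j : Fin t) (i' : Fin k) (l : Fin (n * n)),
            Measurable fun p : Ω × (Fin (j : ℕ) → Fin k → ℝ) => Qf p.1 j p.2 i' l) →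
        (∀ l : Fin n,
            Measurable fun p : Ω × (Fin t → Fin k → ℝ) => (out p.1 p.2).1 l) →
        (∀ l : Fin n,
            Measurable fun p : Ω × (Fin t → Fin k → ℝ) => (out p.1 p.2).2 l) →
        (∀ A : Matrix (Fin n) (Fin n) ℝ,
            (9 / 10 : ℝ≥0∞) ≤
              μ {ω | sqNorm (out ω (QueryMaps.resp (Qf ω) (vec n A))).1 = 1 ∧
                    sqNorm (out ω (QueryMaps.resp (Qf ω) (vec n A))).2 = 1 ∧
                    ∃ u v : Fin n → ℝ, sqNorm u = 1 ∧ sqNorm v = 1 ∧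
                      A.mulVec v = singVal A i • u ∧
                      Aᵀ.mulVec u = singVal A i • v ∧
                      Real.sqrt (sqNorm
                        ((out ω (QueryMaps.resp (Qf ω) (vec n A))).1 - u)) ≤ 1 / 10 ∧
                      Real.sqrt (sqNorm
                        ((out ω (QueryMaps.resp (Qf ω) (vec n A))).2 - v)) ≤ 1 / 10}) →
        c * (Real.log ((n : ℝ) ^ 2 / k) / Real.log (Real.log n)) ≤ (t : ℝ) := by
  obtain ⟨c, n₀, hc, h⟩ := singular_vector_round_lower_bound_general
  refine ⟨c, n₀, hc, fun n i k t hn hi hin hnk _ Ω _ μ _ Qf out hQ hQf hout _ hsucc =>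
    h n i k t hn hi hin hnk Ω μ Qf (fun ω x => (out ω x).1) hQ hQf (measurable_pi_lambda _ hout)
      fun A => (hsucc A).trans (measure_mono ?_)⟩
  rintro ω ⟨hx, -, u, v, hu, hv, hAv, hAu, hxu, -⟩
  exact ⟨hx, u, v, hu, hv, hAv, hAu, hxu⟩

end
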